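/- Let n ≥ 2 be an integer, θ ∈ (0, π/2) and 1 ≤ k < n. Define ℓ : C_θ → ℝ by ℓ(ζ) := sin²θ − cos θ · ζ_{n+1} (the capillary support function of the unit spherical cap). Suppose φ : C_θ → (0,∞) is smooth with τ[φ^{−1/k}] ≥ 0, φ^{−1/k} a capillary function, and ∫_{C_θ} φ(ζ) ζ_i dσ(ζ) = 0 for all i = 1,…,n. Then for every t ∈ [0,1] there exists a vector z_t ∈ ℝ^{n+1} with ⟨z_t, E_{n+1}⟩ = 0 such that, setting f_t(ζ) := (1−t)ℓ(ζ) + t·φ(ζ)^{−1/k} − ⟨ζ, z_t⟩ and φ_t := f_t^{−k}, the following hold: f_t > 0 on C_θ; τ[f_t] ≥ 0; f_t is a capillary function; and ∫_{C_θ} φ_t(ζ) ζ_i dσ(ζ) = 0 for all i = 1,…,n. Moreover z_0 = 0, z_1 = 0, and there is a constant C ≥ 1 such that 1/C ≤ φ_t(ζ) ≤ C for all t ∈ [0,1] and all ζ ∈ C_θ. -/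

import Mathlib

open MeasureTheory Real Set
open scoped RealInnerProductSpace

noncomputable section

abbrev V (n : ℕ) := EuclideanSpace ℝ (Fin (n + 1))

/-- The vertical unit vector `E_{n+1}`. -/
def Etop (n : ℕ) : V n := EuclideanSpace.single (Fin.last n) 1

/-- The spherical cap `S^n_θ`. -/
def sphCap (n : ℕ) (θ : ℝ) : Set (V n) :=
  {u | ‖u‖ = 1 ∧ Real.cos θ ≤ u (Fin.last n)}

/-- The boundary circle `∂S^n_θ`. -/
def sphCapBdry (n : ℕ) (θ : ℝ) : Set (V n) :=
  {u | ‖u‖ = 1 ∧ u (Fin.last n) = Real.cos θ}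

/-- The capillary cap `C_θ`. -/
def capCap (n : ℕ) (θ : ℝ) : Set (V n) :=
  {ζ | 0 ≤ ζ (Fin.last n) ∧ ‖ζ + Real.cos θ • Etop n‖ = 1}

/-- The open cone over `S^n_θ`. -/
def coneCap (n : ℕ) (θ : ℝ) : Set (V n) :=
  {x | ∃ l : ℝ, 0 < l ∧ ∃ u ∈ sphCap n θ, x = l • u}

/-- `G` is a positively 1-homogeneous extension of `g : C_θ → ℝ` which is `C^m` on an
open neighborhood of the cone over `S^n_θ`. -/
def IsHomExt (n : ℕ) (θ : ℝ) (m : ℕ∞) (g G : V n → ℝ) : Prop :=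
  (∃ U : Set (V n), IsOpen U ∧ coneCap n θ ⊆ U ∧ ContDiffOn ℝ m G U) ∧
  (∀ l : ℝ, 0 < l → ∀ u ∈ sphCap n θ, G (l • u) = l * G u) ∧
  (∀ ζ ∈ capCap n θ, G (ζ + Real.cos θ • Etop n) = g ζ)

/-- The Hessian of `G` at `u` as a quadratic/bilinear form. -/
def hessQ (n : ℕ) (G : V n → ℝ) (u v w : V n) : ℝ :=
  fderiv ℝ (fderiv ℝ G) u v w

/-- The Hessian matrix `D²G(u)` in the standard coordinates. -/
def hessM (n : ℕ) (G : V n → ℝ) (u : V n) : Matrix (Fin (n + 1)) (Fin (n + 1)) ℝ :=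
  fun i j => fderiv ℝ (fderiv ℝ G) u (EuclideanSpace.single i 1) (EuclideanSpace.single j 1)

/-- `σ_j` of the eigenvalues of `D²G(u)` (via characteristic polynomial coefficients). -/
def sigmaElem (n : ℕ) (j : ℕ) (G : V n → ℝ) (u : V n) : ℝ :=
  (-1 : ℝ) ^ j * ((hessM n G u).charpoly.coeff (n + 1 - j))

/-- `τ[g] ≥ 0` : the Hessian of the extension is positive semidefinite on `S^n_θ`. -/
def TauNonneg (n : ℕ) (θ : ℝ) (G : V n → ℝ) : Prop :=
  ∀ u ∈ sphCap n θ, ∀ v : V n, 0 ≤ hessQ n G u v v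

/-- `τ[g] > 0`. -/
def TauPos (n : ℕ) (θ : ℝ) (G : V n → ℝ) : Prop :=
  TauNonneg n θ G ∧
  ∀ u ∈ sphCap n θ, ∀ v : V n, v ≠ 0 → ⟪v, u⟫ = 0 → 0 < hessQ n G u v v

/-- Capillary (Robin) boundary condition: `∂_{n+1}G = 0` on `∂S^n_θ`. -/
def IsCapillaryF (n : ℕ) (θ : ℝ) (G : V n → ℝ) : Prop :=
  ∀ u ∈ sphCapBdry n θ, fderiv ℝ G u (Etop n) = 0

/-- Reflection negating the horizontal coordinates. -/
def horizNeg (n : ℕ) (ζ : V n) : V n := (2 * ζ (Fin.last n)) • Etop n - ζ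

/-- Support function of a set. -/
def suppFn (n : ℕ) (K : Set (V n)) (u : V n) : ℝ := sSup ((fun y => ⟪u, y⟫) '' K)

/-- Relative interior (within the hyperplane `{x_{n+1}=0}`) of the base `K ∩ {x_{n+1}=0}`. -/
def relintBase (n : ℕ) (K : Set (V n)) : Set (V n) :=
  {x | x (Fin.last n) = 0 ∧ ∃ ε > 0, ∀ y : V n, y (Fin.last n) = 0 → ‖y - x‖ < ε → y ∈ K}

/-- A `θ`-capillary convex body. -/
def IsCapBody (n : ℕ) (θ : ℝ) (K : Set (V n)) : Prop :=
  IsCompact K ∧ Convex ℝ K ∧ (interior K).Nonempty ∧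
  (∀ x ∈ K, 0 ≤ x (Fin.last n)) ∧
  (∀ x ∈ K, 0 < x (Fin.last n) → ∀ u : V n, ‖u‖ = 1 → ⟪u, x⟫ = suppFn n K u →
    Real.cos θ ≤ u (Fin.last n)) ∧
  (∀ v : V n, ‖v‖ = 1 → v (Fin.last n) = 0 →
    suppFn n K (Real.sin θ • v + Real.cos θ • Etop n) = Real.sin θ * suppFn n K v) ∧
  (relintBase n K).Nonempty

/-- `ψ` is one of `x²`, `x^p (p<0)`, `-log x`. -/
def PsiOK (ψ : ℝ → ℝ) : Prop :=
  (ψ = fun x : ℝ => x ^ 2) ∨ (∃ p : ℝ, p < 0 ∧ ψ = fun x : ℝ => x ^ p) ∨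
    (ψ = fun x : ℝ => -Real.log x)

/-- The vector with horizontal coordinates `x` and height `b`. -/
def liftV (n : ℕ) (x : Fin n → ℝ) (b : ℝ) : V n :=
  WithLp.toLp 2 (Fin.snoc (α := fun _ => ℝ) x b)

/-- The horizontal coordinates of a vector. -/
def horizV (n : ℕ) (u : V n) : Fin n → ℝ := fun i => u i.castSucc

@[simp] lemma liftV_castSucc (n : ℕ) (x : Fin n → ℝ) (b : ℝ) (i : Fin n) :
    liftV n x b i.castSucc = x i := by simp [liftV]

@[simp] lemma liftV_last (n : ℕ) (x : Fin n → ℝ) (b : ℝ) :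
    liftV n x b (Fin.last n) = b := by simp [liftV]

lemma horizV_liftV (n : ℕ) (x : Fin n → ℝ) (b : ℝ) : horizV n (liftV n x b) = x := by
  ext i; simp [horizV]

lemma liftV_horizV (n : ℕ) (u : V n) : liftV n (horizV n u) (u (Fin.last n)) = u := by
  ext i
  refine Fin.lastCases ?_ (fun j => ?_) i <;> simp [horizV]

lemma norm_sq_liftV (n : ℕ) (x : Fin n → ℝ) (b : ℝ) :
    ‖liftV n x b‖ ^ 2 = ∑ i, x i ^ 2 + b ^ 2 := by
  rw [EuclideanSpace.real_norm_sq_eq, Fin.sum_univ_castSucc]; simp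

lemma contDiff_liftV_one (n : ℕ) : ContDiff ℝ 1 (fun x : Fin n → ℝ => liftV n x 1) := by
  rw [contDiff_euclidean]
  intro i
  refine Fin.lastCases ?_ (fun j => ?_) i
  · simpa using contDiff_const
  · simpa using contDiff_apply ℝ ℝ j

lemma lipschitzWith_horizV (n : ℕ) : LipschitzWith 1 (horizV n) := by
  refine LipschitzWith.of_dist_le_mul fun u v => ?_
  rw [NNReal.coe_one, one_mul, dist_pi_le_iff dist_nonneg]
  intro i
  rw [dist_eq_norm, dist_eq_norm]
  exact PiLp.norm_apply_le (u - v) i.castSucc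

lemma isCompact_sphCap (n : ℕ) (θ : ℝ) : IsCompact (sphCap n θ) := by
  refine (isCompact_sphere (0 : V n) 1).of_isClosed_subset ?_ fun u hu => by simpa using hu.1
  exact (isClosed_eq continuous_norm continuous_const).inter
    (isClosed_le continuous_const (EuclideanSpace.proj (𝕜 := ℝ) (Fin.last n)).continuous)

lemma hausdorffMeasure_sphCap_lt_top (n : ℕ) (θ : ℝ) (hc : 0 < Real.cos θ) :
    μH[(n : ℝ)] (sphCap n θ) < ⊤ := by
  let T : Set (Fin n → ℝ) := Metric.closedBall 0 (Real.cos θ)⁻¹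
  let g : (Fin n → ℝ) → V n := fun x => ‖liftV n x 1‖⁻¹ • liftV n x 1
  have hne : ∀ x, liftV n x 1 ≠ 0 := fun x h => by
    have := congrArg (fun v : V n => v (Fin.last n)) h
    simp at this
  have hg : ContDiff ℝ 1 g :=
    (((contDiff_liftV_one n).norm ℝ hne).inv fun x => norm_ne_zero_iff.2 (hne x)).smul
      (contDiff_liftV_one n)
  obtain ⟨K, hK⟩ := (hg.contDiffOn (s := T)).exists_lipschitzOnWith one_ne_zero
    (convex_closedBall _ _) (isCompact_closedBall _ _)
  have hsub : sphCap n θ ⊆ g '' T := by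
    rintro u ⟨hu1, hu2⟩
    have hb : 0 < u (Fin.last n) := hc.trans_le hu2
    have hl : liftV n ((u (Fin.last n))⁻¹ • horizV n u) 1 = (u (Fin.last n))⁻¹ • u := by
      ext i
      refine Fin.lastCases ?_ (fun j => ?_) i
      · simp [hb.ne']
      · simp [horizV]
    refine ⟨(u (Fin.last n))⁻¹ • horizV n u, ?_, ?_⟩
    · rw [mem_closedBall_zero_iff, norm_smul, norm_inv, Real.norm_of_nonneg hb.le]
      have h1 : ‖horizV n u‖ ≤ 1 := by
        rw [pi_norm_le_iff_of_nonneg zero_le_one]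
        intro i
        exact (PiLp.norm_apply_le u i.castSucc).trans hu1.le
      calc (u (Fin.last n))⁻¹ * ‖horizV n u‖ ≤ (Real.cos θ)⁻¹ * 1 := by gcongr
        _ = _ := mul_one _
    · simp only [g]
      rw [hl, norm_smul, norm_inv, Real.norm_of_nonneg hb.le, hu1, smul_smul]
      simp [hb.ne']
  refine (measure_mono hsub).trans_lt ?_
  refine (hK.hausdorffMeasure_image_le (Nat.cast_nonneg n)).trans_lt ?_
  have : (μH[(n : ℝ)] : Measure (Fin n → ℝ)) = volume := by
    simpa using hausdorffMeasure_pi_real (ι := Fin n)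
  rw [this]
  exact ENNReal.mul_lt_top (ENNReal.rpow_lt_top_of_nonneg (Nat.cast_nonneg n) (by simp))
    (isCompact_closedBall _ _).measure_lt_top

lemma hausdorffMeasure_inter_sphCap_pos (n : ℕ) (θ : ℝ) (hc : 0 < Real.cos θ)
    (hs : 0 < Real.sin θ) {O : Set (V n)} (hO : IsOpen O) {u : V n} (huO : u ∈ O)
    (hu : u ∈ sphCap n θ) : 0 < μH[(n : ℝ)] (O ∩ sphCap n θ) := by
  let q : (Fin n → ℝ) → ℝ := fun x => ∑ i, x i ^ 2
  have hq : Continuous q := by fun_prop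
  let g : (Fin n → ℝ) → V n := fun x => liftV n x (√(1 - q x))
  have hg : Continuous g := by
    refine (PiLp.continuous_toLp 2 _).comp (continuous_pi fun i => ?_)
    refine Fin.lastCases ?_ (fun j => ?_) i
    · simpa using (continuous_const.sub hq).sqrt
    · simpa using continuous_apply j
  have hcs := Real.sin_sq_add_cos_sq θ
  have hub : 0 < u (Fin.last n) := hc.trans_le hu.2
  have hqu : q (horizV n u) = 1 - u (Fin.last n) ^ 2 := by
    have := norm_sq_liftV n (horizV n u) (u (Fin.last n))
    rw [liftV_horizV, hu.1] at this
    simp only [q]; linarith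
  have hgu : g (horizV n u) = u := by
    simp only [g, hqu, sub_sub_cancel, Real.sqrt_sq hub.le, liftV_horizV]
  have hW : IsOpen (g ⁻¹' O ∩ {x | q x < Real.sin θ ^ 2}) :=
    (hO.preimage hg).inter (isOpen_lt hq continuous_const)
  have hWne : (g ⁻¹' O ∩ {x | q x < Real.sin θ ^ 2}).Nonempty := by
    have h1 : ∀ᶠ r : ℝ in nhdsWithin 1 (Ioo 0 1), g (r • horizV n u) ∈ O := by
      have : ContinuousAt (fun r : ℝ => g (r • horizV n u)) 1 := by fun_prop
      refine (this.eventually_mem (hO.mem_nhds ?_)).filter_mono nhdsWithin_le_nhds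
      simpa [hgu] using huO
    have : (nhdsWithin (1 : ℝ) (Ioo 0 1)).NeBot := by
      apply mem_closure_iff_nhdsWithin_neBot.1
      rw [closure_Ioo zero_ne_one]; simp
    obtain ⟨r, hr, hr01⟩ := (h1.and self_mem_nhdsWithin).exists
    refine ⟨r • horizV n u, hr, ?_⟩
    have : q (r • horizV n u) = r ^ 2 * q (horizV n u) := by
      simp [q, mul_pow, Finset.mul_sum]
    simp only [mem_ofPred_eq, this, hqu]
    have hr2 : r ^ 2 < 1 := by nlinarith [hr01.1, hr01.2]
    have : 0 ≤ 1 - u (Fin.last n) ^ 2 := by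
      rw [← hqu]; exact Finset.sum_nonneg fun i _ => sq_nonneg _
    have h3 : Real.cos θ ^ 2 ≤ u (Fin.last n) ^ 2 := by gcongr; exact hu.2
    have hr0 : 0 < r ^ 2 := by have := hr01.1; positivity
    nlinarith [mul_le_mul_of_nonneg_left h3 hr0.le, mul_pos hs hs]
  have hsub : g ⁻¹' O ∩ {x | q x < Real.sin θ ^ 2} ⊆ horizV n '' (O ∩ sphCap n θ) := by
    rintro x ⟨hxO, hx⟩
    have hx' : q x < Real.sin θ ^ 2 := hx
    refine ⟨g x, ⟨hxO, ?_, ?_⟩, horizV_liftV _ _ _⟩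
    · have := norm_sq_liftV n x (√(1 - q x))
      rw [Real.sq_sqrt (by nlinarith)] at this
      have h2 : ‖g x‖ ^ 2 = 1 := by simp only [g]; rw [this]; simp [q]
      nlinarith [norm_nonneg (g x)]
    · simp only [g, liftV_last]
      apply Real.le_sqrt_of_sq_le
      linarith
  have h0 := hW.measure_pos volume hWne
  have hvol : (μH[(n : ℝ)] : Measure (Fin n → ℝ)) = volume := by
    simpa using hausdorffMeasure_pi_real (ι := Fin n)
  have h1 := (lipschitzWith_horizV n).hausdorffMeasure_image_le (Nat.cast_nonneg n)
    (O ∩ sphCap n θ)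
  rw [hvol] at h1
  simpa using (h0.trans_le (measure_mono hsub)).trans_le h1

/-- The surface measure of the spherical cap. -/
def capMeasure (n : ℕ) (θ : ℝ) : Measure (V n) := μH[(n : ℝ)].restrict (sphCap n θ)

lemma setIntegral_capCap (n : ℕ) (θ : ℝ) (F : V n → ℝ) :
    ∫ ζ in capCap n θ, F ζ ∂μH[(n : ℝ)] =
      ∫ u, F (u - Real.cos θ • Etop n) ∂capMeasure n θ := by
  let e := IsometryEquiv.addRight (Real.cos θ • Etop n)
  have hpre : e ⁻¹' sphCap n θ = capCap n θ := by
    ext ζ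
    simp [e, sphCap, capCap, Etop, and_comm]
  have := (e.measurePreserving_hausdorffMeasure (n : ℝ)).setIntegral_preimage_emb
    e.toHomeomorph.measurableEmbedding (fun u => F (u - Real.cos θ • Etop n)) (sphCap n θ)
  rw [hpre] at this
  rw [capMeasure, ← this]
  simp [e]

lemma inner_Etop (n : ℕ) (p : V n) : ⟪p, Etop n⟫ = p (Fin.last n) := by
  simp [Etop, EuclideanSpace.inner_single_right]

lemma Etop_last (n : ℕ) : Etop n (Fin.last n) = 1 := by simp [Etop]

lemma norm_Etop (n : ℕ) : ‖Etop n‖ = 1 := by simp [Etop]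

/-- The boundary point of the spherical cap in the horizontal direction `e`. -/
def rimPt (n : ℕ) (θ : ℝ) (e : V n) : V n := Real.sin θ • e + Real.cos θ • Etop n

lemma inner_rimPt (n : ℕ) (θ : ℝ) (p e : V n) :
    ⟪p, rimPt n θ e⟫ = Real.sin θ * ⟪p, e⟫ + Real.cos θ * p (Fin.last n) := by
  rw [rimPt, inner_add_right, inner_smul_right, inner_smul_right, inner_Etop]

lemma rimPt_last (n : ℕ) (θ : ℝ) {e : V n} (he : e (Fin.last n) = 0) :
    rimPt n θ e (Fin.last n) = Real.cos θ := by
  simp [rimPt, he, Etop]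

lemma rimPt_mem (n : ℕ) (θ : ℝ) {e : V n} (he1 : ‖e‖ = 1) (he : e (Fin.last n) = 0) :
    rimPt n θ e ∈ sphCap n θ := by
  refine ⟨?_, (rimPt_last n θ he).ge⟩
  have h : ‖rimPt n θ e‖ ^ 2 = 1 := by
    rw [← real_inner_self_eq_norm_sq, inner_rimPt, rimPt_last n θ he, real_inner_comm,
      inner_rimPt, real_inner_self_eq_norm_sq, he1, he]
    nlinarith [Real.sin_sq_add_cos_sq θ]
  nlinarith [norm_nonneg (rimPt n θ e)]

/-- `h` behaves on the spherical cap like the support function of a convex body in the upper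
half-space whose supporting points over the rim of the cap are horizontal. -/
def IsCapSupp (n : ℕ) (θ : ℝ) (h : V n → ℝ) : Prop :=
  ∀ u ∈ sphCap n θ, ∃ p : V n, ⟪p, u⟫ = h u ∧ (∀ x ∈ sphCap n θ, ⟪p, x⟫ ≤ h x) ∧
    0 ≤ p (Fin.last n) ∧ (u (Fin.last n) = Real.cos θ → p (Fin.last n) = 0)

lemma IsCapSupp.convexComb {n : ℕ} {θ t : ℝ} {A B : V n → ℝ} (hA : IsCapSupp n θ A)
    (hB : IsCapSupp n θ B) (ht : t ∈ Icc (0 : ℝ) 1) :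
    IsCapSupp n θ (fun u => (1 - t) * A u + t * B u) := by
  intro u hu
  obtain ⟨p, hp1, hp2, hp3, hp4⟩ := hA u hu
  obtain ⟨q, hq1, hq2, hq3, hq4⟩ := hB u hu
  have h1 : 0 ≤ 1 - t := sub_nonneg.2 ht.2
  have h0 := ht.1
  refine ⟨(1 - t) • p + t • q, ?_, fun x hx => ?_, ?_, fun h => ?_⟩
  · rw [inner_add_left, real_inner_smul_left, real_inner_smul_left, hp1, hq1]
  · rw [inner_add_left, real_inner_smul_left, real_inner_smul_left]
    exact add_le_add (mul_le_mul_of_nonneg_left (hp2 x hx) h1)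
      (mul_le_mul_of_nonneg_left (hq2 x hx) h0)
  · simp only [PiLp.add_apply, PiLp.smul_apply, smul_eq_mul]
    positivity
  · simp [hp4 h, hq4 h]

lemma IsCapSupp.sub_inner {n : ℕ} {θ : ℝ} {h : V n → ℝ} (hh : IsCapSupp n θ h) {z : V n}
    (hz : z (Fin.last n) = 0) : IsCapSupp n θ (fun u => h u - ⟪u, z⟫) := by
  intro u hu
  obtain ⟨p, hp1, hp2, hp3, hp4⟩ := hh u hu
  refine ⟨p - z, ?_, fun x hx => ?_, ?_, fun h => ?_⟩
  · rw [inner_sub_left, hp1, real_inner_comm]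
  · rw [inner_sub_left, real_inner_comm x z]
    linarith [hp2 x hx]
  · simpa [hz] using hp3
  · simp [hz, hp4 h]

/-- The reflection in the hyperplane orthogonal to `e`. -/
def mirror (n : ℕ) (e : V n) : V n ≃ₗᵢ[ℝ] V n := (ℝ ∙ e)ᗮ.reflection

lemma mirror_apply (n : ℕ) {e : V n} (he : ‖e‖ = 1) (u : V n) :
    mirror n e u = u - (2 * ⟪u, e⟫) • e := by
  rw [mirror, Submodule.reflection_orthogonal_apply, Submodule.reflection_singleton_apply, he,
    real_inner_comm]
  simp [mul_smul, two_smul]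

lemma mirror_mirror (n : ℕ) (e u : V n) : mirror n e (mirror n e u) = u :=
  Submodule.reflection_reflection _ u

lemma inner_mirror (n : ℕ) {e : V n} (he : ‖e‖ = 1) (u : V n) :
    ⟪mirror n e u, e⟫ = -⟪u, e⟫ := by
  rw [mirror_apply n he, inner_sub_left, real_inner_smul_left, real_inner_self_eq_norm_sq, he]
  ring

lemma mirror_last (n : ℕ) {e : V n} (he : ‖e‖ = 1) (he0 : e (Fin.last n) = 0) (u : V n) :
    mirror n e u (Fin.last n) = u (Fin.last n) := by
  rw [mirror_apply n he]; simp [he0]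

lemma mirror_mem_iff (n : ℕ) (θ : ℝ) {e : V n} (he : ‖e‖ = 1) (he0 : e (Fin.last n) = 0)
    (u : V n) : mirror n e u ∈ sphCap n θ ↔ u ∈ sphCap n θ := by
  simp only [sphCap, mem_ofPred_eq, mirror_last n he he0, LinearIsometryEquiv.norm_map]

/-- If the support function vanishes in a rim direction, the body lies on one side of the
corresponding vertical hyperplane, and the support function is smaller on the other side. -/
lemma IsCapSupp.le_mirror {n : ℕ} {θ : ℝ} {f : V n → ℝ} (hf : IsCapSupp n θ f)
    (hs : 0 < Real.sin θ) (hc : 0 < Real.cos θ) {e : V n} (he : ‖e‖ = 1)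
    (he0 : e (Fin.last n) = 0) (hfe : f (rimPt n θ e) ≤ 0) {u : V n} (hu : u ∈ sphCap n θ)
    (hue : 0 ≤ ⟪u, e⟫) : f u ≤ f (mirror n e u) := by
  obtain ⟨p, hp1, hp2, hp3, -⟩ := hf u hu
  have h1 := hp2 _ (rimPt_mem n θ he he0)
  rw [inner_rimPt] at h1
  have h2 : ⟪p, e⟫ ≤ 0 := by
    have := mul_nonneg hc.le hp3
    by_contra! h
    linarith [mul_pos hs h]
  have h3 := hp2 _ ((mirror_mem_iff n θ he he0 u).2 hu)
  rw [mirror_apply n he, inner_sub_right, inner_smul_right, hp1] at h3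
  rw [mirror_apply n he]
  nlinarith [mul_nonneg_of_nonpos_of_nonpos h2 (neg_nonpos.2 hue)]

/-- When the origin of the translated body lies on its boundary, some rim direction `e` in which
the support function vanishes has a positive inner product with every zero. -/
lemma IsCapSupp.exists_direction {n : ℕ} {θ : ℝ} {h : V n → ℝ} (hh : IsCapSupp n θ h)
    (hs : 0 < Real.sin θ) (hc : 0 < Real.cos θ) (hpos : ∀ u ∈ sphCap n θ, 0 < h u) {z : V n}
    (hz : z (Fin.last n) = 0) (hnn : ∀ u ∈ sphCap n θ, 0 ≤ h u - ⟪u, z⟫) {u₀ : V n}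
    (hu₀ : u₀ ∈ sphCap n θ) (h0 : h u₀ - ⟪u₀, z⟫ = 0) :
    ∃ e : V n, ‖e‖ = 1 ∧ e (Fin.last n) = 0 ∧ h (rimPt n θ e) - ⟪rimPt n θ e, z⟫ ≤ 0 ∧
      ∀ u ∈ sphCap n θ, ⟪u, e⟫ ≤ 0 → 0 < h u - ⟪u, z⟫ := by
  set f : V n → ℝ := fun u => h u - ⟪u, z⟫ with hfdef
  have hf : IsCapSupp n θ f := hh.sub_inner hz
  let K : Set (V n) := {q | 0 ≤ q (Fin.last n) ∧ ∀ x ∈ sphCap n θ, ⟪q, x⟫ ≤ f x}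
  let N : Set (V n) := {w | w (Fin.last n) = 0 ∧ ∀ q ∈ K, ⟪w, q⟫ ≤ 0}
  have hN0 : (0 : V n) ∈ N := ⟨rfl, fun q _ => by simp⟩
  have hNsmul : ∀ w ∈ N, ∀ a : ℝ, 0 ≤ a → a • w ∈ N := fun w hw a ha =>
    ⟨by simp [hw.1], fun q hq => by
      rw [real_inner_smul_left]; exact mul_nonpos_of_nonneg_of_nonpos ha (hw.2 q hq)⟩
  have hNconv : Convex ℝ N := by
    intro v hv w hw a b ha hb _
    refine ⟨by simp [hv.1, hw.1], fun q hq => ?_⟩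
    rw [inner_add_left, real_inner_smul_left, real_inner_smul_left]
    have := mul_nonpos_of_nonneg_of_nonpos ha (hv.2 q hq)
    have := mul_nonpos_of_nonneg_of_nonpos hb (hw.2 q hq)
    linarith
  have hNclosed : IsClosed N := by
    have : N = {w | ⟪w, Etop n⟫ = 0} ∩ ⋂ q ∈ K, {w | ⟪w, q⟫ ≤ 0} := by
      ext w; simp [N, inner_Etop]
    rw [this]
    exact (isClosed_eq (by fun_prop) continuous_const).inter
      (isClosed_biInter fun q _ => isClosed_le (by fun_prop) continuous_const)
  have hzero : ∀ u ∈ sphCap n θ, f u = 0 →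
      u - u (Fin.last n) • Etop n ∈ N ∧ 0 < ⟪z, u - u (Fin.last n) • Etop n⟫ := by
    intro u hu hfu
    set a := u - u (Fin.last n) • Etop n with ha
    have ha0 : a (Fin.last n) = 0 := by simp [ha, Etop_last]
    have hpa : ∀ p : V n, p (Fin.last n) = 0 → ⟪p, a⟫ = ⟪p, u⟫ := fun p hp => by
      rw [ha, inner_sub_right, inner_smul_right, inner_Etop, hp]; simp
    have hza : 0 < ⟪z, a⟫ := by
      rw [hpa z hz, real_inner_comm]
      have := hpos u hu
      simp only [hfdef] at hfu
      linarith
    have hane : a ≠ 0 := fun h => by simp [h] at hza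
    have hap : 0 < ‖a‖ := norm_pos_iff.2 hane
    have he : ‖‖a‖⁻¹ • a‖ = 1 := norm_smul_inv_norm hane
    have he0 : (‖a‖⁻¹ • a) (Fin.last n) = 0 := by simp [ha0]
    refine ⟨⟨ha0, fun q hq => ?_⟩, hza⟩
    obtain ⟨p, hp1, hp2, -, hp4⟩ := hf _ (rimPt_mem n θ he he0)
    have hp0 := hp4 (rimPt_last n θ he0)
    have h1 : ⟪p, a⟫ ≤ 0 := by rw [hpa p hp0, ← hfu]; exact hp2 u hu
    have h2 : f (rimPt n θ (‖a‖⁻¹ • a)) ≤ 0 := by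
      rw [← hp1, inner_rimPt, hp0, mul_zero, add_zero, inner_smul_right]
      exact mul_nonpos_of_nonneg_of_nonpos hs.le
        (mul_nonpos_of_nonneg_of_nonpos (inv_nonneg.2 hap.le) h1)
    have h3 := (hq.2 _ (rimPt_mem n θ he he0)).trans h2
    rw [inner_rimPt, inner_smul_right] at h3
    rw [real_inner_comm]
    by_contra! h
    have := mul_nonneg hc.le hq.1
    have := mul_pos hs (mul_pos (inv_pos.2 hap) h)
    linarith
  obtain ⟨e, heN, hemin⟩ := exists_norm_eq_iInf_of_complete_convex ⟨0, hN0⟩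
    hNclosed.isComplete hNconv z
  rw [norm_eq_iInf_iff_real_inner_le_zero hNconv heN] at hemin
  have hle : ∀ w ∈ N, ⟪z, w⟫ ≤ ⟪e, w⟫ := by
    intro w hw
    have h1 := hemin _ hN0
    have h2 := hemin _ hw
    have h3 := hemin _ (hNsmul e heN 2 zero_le_two)
    simp only [inner_sub_left, inner_sub_right, inner_smul_right, inner_zero_right] at h1 h2 h3
    linarith
  have hepos : ∀ u ∈ sphCap n θ, f u = 0 → 0 < ⟪e, u⟫ := by
    intro u hu hfu
    obtain ⟨h1, h2⟩ := hzero u hu hfu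
    have h3 := h2.trans_le (hle _ h1)
    rwa [inner_sub_right, inner_smul_right, inner_Etop, heN.1, mul_zero, sub_zero] at h3
  have hene : e ≠ 0 := fun h => by
    have := hepos u₀ hu₀ h0
    simp [h] at this
  have hep : 0 < ‖e‖ := norm_pos_iff.2 hene
  have he : ‖‖e‖⁻¹ • e‖ = 1 := norm_smul_inv_norm hene
  have heN' := hNsmul e heN ‖e‖⁻¹ (inv_nonneg.2 hep.le)
  refine ⟨‖e‖⁻¹ • e, he, heN'.1, ?_, fun u hu hue => ?_⟩
  · obtain ⟨p, hp1, hp2, hp3, hp4⟩ := hf _ (rimPt_mem n θ he heN'.1)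
    have h1 := heN'.2 p ⟨hp3, hp2⟩
    change f _ ≤ 0
    rw [← hp1, inner_rimPt, hp4 (rimPt_last n θ heN'.1), mul_zero, add_zero, real_inner_comm]
    exact mul_nonpos_of_nonneg_of_nonpos hs.le h1
  · refine lt_of_le_of_ne (hnn u hu) fun h => ?_
    have h1 := hepos u hu h.symm
    rw [inner_smul_right, real_inner_comm] at hue
    linarith [mul_pos (inv_pos.2 hep) h1]

lemma isFiniteMeasure_capMeasure (n : ℕ) (θ : ℝ) (hc : 0 < Real.cos θ) :
    IsFiniteMeasure (capMeasure n θ) :=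
  ⟨by rw [capMeasure, Measure.restrict_apply_univ]; exact hausdorffMeasure_sphCap_lt_top n θ hc⟩

lemma measurableSet_sphCap (n : ℕ) (θ : ℝ) : MeasurableSet (sphCap n θ) :=
  (isCompact_sphCap n θ).measurableSet

lemma ae_mem_sphCap (n : ℕ) (θ : ℝ) : ∀ᵐ u ∂capMeasure n θ, u ∈ sphCap n θ :=
  ae_restrict_mem (measurableSet_sphCap n θ)

lemma capMeasure_restrict (n : ℕ) (θ : ℝ) :
    (capMeasure n θ).restrict (sphCap n θ) = capMeasure n θ := by
  rw [capMeasure, Measure.restrict_restrict (measurableSet_sphCap n θ), inter_self]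

lemma integrable_capMeasure_of_continuousOn {E : Type*} [NormedAddCommGroup E] {n : ℕ} {θ : ℝ}
    (hc : 0 < Real.cos θ) {q : V n → E} (hq : ContinuousOn q (sphCap n θ)) :
    Integrable q (capMeasure n θ) := by
  have := isFiniteMeasure_capMeasure n θ hc
  have h := hq.integrableOn_compact (μ := capMeasure n θ) (isCompact_sphCap n θ)
  rwa [IntegrableOn, capMeasure_restrict] at h

lemma integrable_capMeasure {E : Type*} [NormedAddCommGroup E] {n : ℕ} {θ : ℝ}
    (hc : 0 < Real.cos θ) {q : V n → E} (hq : Continuous q) : Integrable q (capMeasure n θ) :=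
  integrable_capMeasure_of_continuousOn hc hq.continuousOn

lemma continuous_integral_capMeasure {X : Type*} [TopologicalSpace X]
    [FirstCountableTopology X] [LocallyCompactSpace X] {n : ℕ} {θ : ℝ} (hc : 0 < Real.cos θ)
    {F : X → V n → ℝ} (hF : Continuous F.uncurry) :
    Continuous fun x => ∫ u, F x u ∂capMeasure n θ := by
  have := isFiniteMeasure_capMeasure n θ hc
  have h := continuous_parametric_integral_of_continuous (μ := capMeasure n θ) hF
    (isCompact_sphCap n θ)
  rwa [capMeasure_restrict] at h

lemma integral_capMeasure_mono {n : ℕ} {θ : ℝ} (hc : 0 < Real.cos θ) {p q : V n → ℝ}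
    (hp : Continuous p) (hq : Continuous q) (hpq : ∀ u ∈ sphCap n θ, p u ≤ q u) :
    ∫ u, p u ∂capMeasure n θ ≤ ∫ u, q u ∂capMeasure n θ :=
  integral_mono_ae (integrable_capMeasure hc hp) (integrable_capMeasure hc hq)
    ((ae_mem_sphCap n θ).mono hpq)

lemma integral_capMeasure_pos {n : ℕ} {θ : ℝ} (hs : 0 < Real.sin θ) (hc : 0 < Real.cos θ)
    {q : V n → ℝ} (hq : Continuous q) (hnn : ∀ u ∈ sphCap n θ, 0 ≤ q u) {u₀ : V n}
    (hu₀ : u₀ ∈ sphCap n θ) (hpos : 0 < q u₀) : 0 < ∫ u, q u ∂capMeasure n θ := by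
  rw [integral_pos_iff_support_of_nonneg_ae ((ae_mem_sphCap n θ).mono hnn)
    (integrable_capMeasure hc hq)]
  have hO : IsOpen {u | 0 < q u} := isOpen_lt continuous_const hq
  have h := hausdorffMeasure_inter_sphCap_pos n θ hc hs hO hpos hu₀
  rw [← Measure.restrict_apply hO.measurableSet] at h
  exact h.trans_le (measure_mono fun u hu => ne_of_gt hu)

lemma integral_mirror {n : ℕ} {θ : ℝ} {e : V n} (he : ‖e‖ = 1) (he0 : e (Fin.last n) = 0)
    (q : V n → ℝ) : ∫ u, q (mirror n e u) ∂capMeasure n θ = ∫ u, q u ∂capMeasure n θ := by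
  have h := ((mirror n e).toIsometryEquiv.measurePreserving_hausdorffMeasure
    (n : ℝ)).setIntegral_preimage_emb
      (mirror n e).toIsometryEquiv.toHomeomorph.measurableEmbedding q (sphCap n θ)
  have hpre : (mirror n e).toIsometryEquiv ⁻¹' sphCap n θ = sphCap n θ := by
    ext u; exact mirror_mem_iff n θ he he0 u
  rw [hpre] at h
  exact h

lemma two_mul_integral_mul_inner {n : ℕ} {θ : ℝ} (hc : 0 < Real.cos θ) {e : V n}
    (he : ‖e‖ = 1) (he0 : e (Fin.last n) = 0) {q : V n → ℝ} (hq : Continuous q) :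
    2 * ∫ u, q u * ⟪u, e⟫ ∂capMeasure n θ =
      ∫ u, (q u - q (mirror n e u)) * ⟪u, e⟫ ∂capMeasure n θ := by
  have hm : Continuous fun u => q (mirror n e u) := hq.comp (mirror n e).continuous
  have h1 := integral_mirror (θ := θ) he he0 (fun u => q u * ⟪u, e⟫)
  simp only [inner_mirror n he, mul_neg, integral_neg] at h1
  simp only [sub_mul]
  rw [integral_sub (integrable_capMeasure hc (by fun_prop))
    (integrable_capMeasure hc (by fun_prop))]
  linarith

lemma sub_mirror_mul_inner_nonneg {n : ℕ} {θ : ℝ} {e : V n} (he : ‖e‖ = 1)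
    (he0 : e (Fin.last n) = 0) {q : V n → ℝ}
    (hmir : ∀ u ∈ sphCap n θ, 0 ≤ ⟪u, e⟫ → q (mirror n e u) ≤ q u) {u : V n}
    (hu : u ∈ sphCap n θ) : 0 ≤ (q u - q (mirror n e u)) * ⟪u, e⟫ := by
  rcases le_total 0 ⟪u, e⟫ with h | h
  · exact mul_nonneg (sub_nonneg.2 (hmir u hu h)) h
  · have := hmir _ ((mirror_mem_iff n θ he he0 u).2 hu) (by rw [inner_mirror n he]; linarith)
    rw [mirror_mirror] at this
    exact mul_nonneg_of_nonpos_of_nonpos (sub_nonpos.2 this) h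

lemma integral_mul_inner_nonneg {n : ℕ} {θ : ℝ} (hc : 0 < Real.cos θ) {e : V n}
    (he : ‖e‖ = 1) (he0 : e (Fin.last n) = 0) {q : V n → ℝ} (hq : Continuous q)
    (hmir : ∀ u ∈ sphCap n θ, 0 ≤ ⟪u, e⟫ → q (mirror n e u) ≤ q u) :
    0 ≤ ∫ u, q u * ⟪u, e⟫ ∂capMeasure n θ := by
  have h : 0 ≤ ∫ u, (q u - q (mirror n e u)) * ⟪u, e⟫ ∂capMeasure n θ :=
    integral_nonneg_of_ae ((ae_mem_sphCap n θ).mono fun u hu =>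
      sub_mirror_mul_inner_nonneg he he0 hmir hu)
  rw [← two_mul_integral_mul_inner hc he he0 hq] at h
  linarith

lemma integral_mul_inner_pos {n : ℕ} {θ : ℝ} (hs : 0 < Real.sin θ) (hc : 0 < Real.cos θ)
    {e : V n} (he : ‖e‖ = 1) (he0 : e (Fin.last n) = 0) {q : V n → ℝ} (hq : Continuous q)
    (hmir : ∀ u ∈ sphCap n θ, 0 ≤ ⟪u, e⟫ → q (mirror n e u) ≤ q u) {u₀ : V n}
    (hu₀ : u₀ ∈ sphCap n θ) (hpos : 0 < ⟪u₀, e⟫) (hlt : q (mirror n e u₀) < q u₀) :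
    0 < ∫ u, q u * ⟪u, e⟫ ∂capMeasure n θ := by
  have hm : Continuous fun u => q (mirror n e u) := hq.comp (mirror n e).continuous
  have h : 0 < ∫ u, (q u - q (mirror n e u)) * ⟪u, e⟫ ∂capMeasure n θ :=
    integral_capMeasure_pos hs hc (by fun_prop)
      (fun u hu => sub_mirror_mul_inner_nonneg he he0 hmir hu) hu₀
      (mul_pos (sub_pos.2 hlt) hpos)
  rw [← two_mul_integral_mul_inner hc he he0 hq] at h
  linarith

/-- Horizontal translations keeping the support function nonnegative are bounded. -/
lemma norm_le_of_inner_le {n : ℕ} {θ M : ℝ} (hs : 0 < Real.sin θ) (hM : 0 ≤ M) {z : V n}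
    (hz : z (Fin.last n) = 0) (h : ∀ u ∈ sphCap n θ, ⟪u, z⟫ ≤ M) : ‖z‖ ≤ M / Real.sin θ := by
  rcases eq_or_ne z 0 with rfl | hne
  · rw [norm_zero]; positivity
  have he0 : (‖z‖⁻¹ • z) (Fin.last n) = 0 := by simp [hz]
  have h1 := h _ (rimPt_mem n θ (norm_smul_inv_norm hne) he0)
  have hp := norm_pos_iff.2 hne
  rw [real_inner_comm, inner_rimPt, hz, inner_smul_right, real_inner_self_eq_norm_sq] at h1
  rw [le_div_iff₀ hs]
  have h2 : ‖z‖⁻¹ * ‖z‖ ^ 2 = ‖z‖ := by field_simp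
  rw [RCLike.ofReal_real_eq_id, id, h2] at h1
  linarith

lemma primitive_sub_le {w : ℝ → ℝ} (hw : Continuous w) (hanti : Antitone w) (a b : ℝ) :
    w a * (a - b) ≤ ∫ x in b..a, w x := by
  rcases le_total b a with h | h
  · have := intervalIntegral.integral_mono_on (μ := volume) h (f := fun _ => w a)
      intervalIntegrable_const (hw.intervalIntegrable b a) (fun x hx => hanti hx.2)
    simpa [mul_comm] using this
  · have := intervalIntegral.integral_mono_on (μ := volume) h (g := fun _ => w a)
      (hw.intervalIntegrable a b) intervalIntegrable_const (fun x hx => hanti hx.1)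
    rw [intervalIntegral.integral_symm a b]
    simp only [intervalIntegral.integral_const, smul_eq_mul] at this
    linarith

/-- A minimizer of a convex functional gives a horizontal translation that balances a
decreasing weight of the support function. -/
lemma IsCapSupp.exists_balanced {n : ℕ} {θ : ℝ} {h : V n → ℝ} (hh : IsCapSupp n θ h)
    (hs : 0 < Real.sin θ) (hc : 0 < Real.cos θ) (hcont : Continuous h)
    (hpos : ∀ u ∈ sphCap n θ, 0 < h u) {w : ℝ → ℝ} (hw : Continuous w) (hanti : Antitone w) :
    ∃ z : V n, z (Fin.last n) = 0 ∧ (∀ u ∈ sphCap n θ, 0 ≤ h u - ⟪u, z⟫) ∧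
      ∀ a : V n, a (Fin.last n) = 0 →
        ∫ u, w (h u - ⟪u, z⟫) * ⟪u, a⟫ ∂capMeasure n θ = 0 := by
  let D : Set (V n) := {z | z (Fin.last n) = 0 ∧ ∀ u ∈ sphCap n θ, ⟪u, z⟫ ≤ h u}
  have hD0 : (0 : V n) ∈ D := ⟨rfl, fun u hu => by simpa using (hpos u hu).le⟩
  obtain ⟨M, hM⟩ := (isCompact_sphCap n θ).bddAbove_image hcont.continuousOn
  have hM' : ∀ u ∈ sphCap n θ, h u ≤ max M 0 := fun u hu =>
    (hM (mem_image_of_mem h hu)).trans (le_max_left _ _)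
  have hDcl : IsClosed D := by
    have : D = {z | ⟪z, Etop n⟫ = 0} ∩ ⋂ u ∈ sphCap n θ, {z | ⟪u, z⟫ ≤ h u} := by
      ext z; simp [D, inner_Etop]
    rw [this]
    exact (isClosed_eq (by fun_prop) continuous_const).inter
      (isClosed_biInter fun q _ => isClosed_le (by fun_prop) continuous_const)
  have hDc : IsCompact D :=
    (isCompact_closedBall (0 : V n) (max M 0 / Real.sin θ)).of_isClosed_subset hDcl
      fun z hz => mem_closedBall_zero_iff.2 (norm_le_of_inner_le hs (le_max_right _ _) hz.1
        fun u hu => (hz.2 u hu).trans (hM' u hu))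
  let F : ℝ → ℝ := fun a => -∫ x in (0 : ℝ)..a, w x
  have hF : Continuous F :=
    (intervalIntegral.continuous_primitive (μ := volume) (fun a b => hw.intervalIntegrable a b) 0).neg
  have hFle : ∀ a b, F a - F b ≤ -(w a * (a - b)) := fun a b => by
    have h1 := primitive_sub_le hw hanti a b
    have h2 := intervalIntegral.integral_interval_sub_left (hw.intervalIntegrable 0 a)
      (hw.intervalIntegrable 0 b) (μ := volume)
    simp only [F]
    linarith
  obtain ⟨z, hzD, hzmin⟩ := hDc.exists_isMinOn ⟨0, hD0⟩
    (continuous_integral_capMeasure (θ := θ) hc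
      (F := fun (z : V n) u => F (h u - ⟪u, z⟫)) (by
        simp only [Function.uncurry_def]; fun_prop)).continuousOn
  have hvar : ∀ y ∈ D, 0 ≤ ∫ u, w (h u - ⟪u, z⟫) * ⟪u, y - z⟫ ∂capMeasure n θ := by
    intro y hy
    let g : ℝ → ℝ := fun r =>
      ∫ u, w (h u - ⟪u, z + r • (y - z)⟫) * ⟪u, y - z⟫ ∂capMeasure n θ
    have hg : Continuous g := continuous_integral_capMeasure (θ := θ) hc
      (F := fun (r : ℝ) u => w (h u - ⟪u, z + r • (y - z)⟫) * ⟪u, y - z⟫) (by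
        simp only [Function.uncurry_def]; fun_prop)
    have hgr : ∀ r ∈ Ioo (0 : ℝ) 1, 0 ≤ g r := by
      intro r hr
      have hzr : z + r • (y - z) ∈ D := by
        refine ⟨by simp [hzD.1, hy.1], fun u hu => ?_⟩
        rw [inner_add_right, inner_smul_right, inner_sub_right]
        nlinarith [hzD.2 u hu, hy.2 u hu, hr.1, hr.2]
      have h1 := isMinOn_iff.1 hzmin _ hzr
      have h2 := integral_capMeasure_mono (θ := θ) hc
        (p := fun u => F (h u - ⟪u, z + r • (y - z)⟫) - F (h u - ⟪u, z⟫))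
        (q := fun u => r * (w (h u - ⟪u, z + r • (y - z)⟫) * ⟪u, y - z⟫))
        (by fun_prop) (by fun_prop) (fun u _ => by
          refine (hFle _ _).trans (le_of_eq ?_)
          simp only [inner_add_right, inner_smul_right]
          ring)
      rw [integral_sub (integrable_capMeasure hc (by fun_prop))
        (integrable_capMeasure hc (by fun_prop)), integral_const_mul] at h2
      refine nonneg_of_mul_nonneg_right (b := g r) ?_ hr.1
      exact (sub_nonneg.2 h1).trans h2
    have h0 : 0 ≤ g 0 := by
      have hcl : (0 : ℝ) ∈ closure (Ioo (0 : ℝ) 1) := by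
        rw [closure_Ioo zero_ne_one]; simp
      have : closure (Ioo (0 : ℝ) 1) ⊆ {r | 0 ≤ g r} :=
        (isClosed_le continuous_const hg).closure_subset_iff.2 hgr
      exact this hcl
    simpa [g] using h0
  let G : V n := ∫ u, w (h u - ⟪u, z⟫) • u ∂capMeasure n θ
  have hG : ∀ a : V n, ∫ u, w (h u - ⟪u, z⟫) * ⟪u, a⟫ ∂capMeasure n θ = ⟪G, a⟫ := by
    intro a
    have hint : Integrable (fun u => w (h u - ⟪u, z⟫) • u) (capMeasure n θ) :=
      integrable_capMeasure hc (by fun_prop)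
    rw [real_inner_comm, ← integral_inner hint a]
    congr 1; ext u
    rw [inner_smul_right, real_inner_comm u a]
  let v : V n := G (Fin.last n) • Etop n - G
  have hv0 : v (Fin.last n) = 0 := by simp [v, Etop_last]
  have hGv : ∀ a : V n, a (Fin.last n) = 0 → ⟪G, a⟫ = -⟪v, a⟫ := fun a ha => by
    rw [inner_sub_left, real_inner_smul_left, real_inner_comm a (Etop n), inner_Etop, ha]; simp
  refine ⟨z, hzD.1, fun u hu => sub_nonneg.2 (hzD.2 u hu), fun a ha => ?_⟩
  rw [hG, hGv a ha]
  suffices v = 0 by simp [this]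
  by_contra hv
  have hvp : 0 < ‖v‖ := norm_pos_iff.2 hv
  have he : ‖‖v‖⁻¹ • v‖ = 1 := norm_smul_inv_norm hv
  set e := ‖v‖⁻¹ • v with hedef
  have he0 : e (Fin.last n) = 0 := by simp [hedef, hv0]
  have hve : v = ‖v‖ • e := by simp [hedef, smul_smul, hvp.ne']
  obtain ⟨p, hp1, hp2, -, hp4⟩ := hh _ (rimPt_mem n θ he he0)
  have hp0 := hp4 (rimPt_last n θ he0)
  have h1 := hvar p ⟨hp0, fun u hu => by rw [real_inner_comm]; exact hp2 u hu⟩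
  rw [hG, hGv _ (by simp [hp0, hzD.1]), hve, real_inner_smul_left, real_inner_comm] at h1
  have h2 : ⟪p - z, e⟫ ≤ 0 := by
    by_contra! h
    linarith [mul_pos hvp h]
  have h3 : h (rimPt n θ e) - ⟪rimPt n θ e, z⟫ ≤ 0 := by
    rw [← hp1, real_inner_comm z, ← inner_sub_left, inner_rimPt]
    simp only [PiLp.sub_apply, hp0, hzD.1, sub_zero, mul_zero, add_zero]
    exact mul_nonpos_of_nonneg_of_nonpos hs.le h2
  have h4 := integral_mul_inner_nonneg (θ := θ) hc he he0
    (q := fun u => w (h u - ⟪u, z⟫)) (by fun_prop)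
    (fun u hu hue => hanti ((hh.sub_inner hzD.1).le_mirror hs hc he he0 h3 hu hue))
  rw [hG, hGv e he0, hve, real_inner_smul_left, real_inner_self_eq_norm_sq, he] at h4
  linarith

/-- The power `s ↦ s ^ (-κ)`, frozen below the level `ε`. -/
def truncPow (κ ε s : ℝ) : ℝ := max s ε ^ (-κ)

lemma continuous_truncPow {κ ε : ℝ} (hε : 0 < ε) : Continuous (truncPow κ ε) := by
  refine Continuous.rpow_const (by fun_prop) fun s => Or.inl ?_
  exact (hε.trans_le (le_max_right _ _)).ne'

lemma truncPow_anti {κ ε s ε' s' : ℝ} (hκ : 0 < κ) (hε : 0 < ε)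
    (h : max s ε ≤ max s' ε') : truncPow κ ε' s' ≤ truncPow κ ε s :=
  Real.rpow_le_rpow_of_nonpos (hε.trans_le (le_max_right _ _)) h (neg_nonpos.2 hκ.le)

lemma antitone_truncPow {κ ε : ℝ} (hκ : 0 < κ) (hε : 0 < ε) : Antitone (truncPow κ ε) :=
  fun _ _ h => truncPow_anti hκ hε (max_le_max_right _ h)

lemma truncPow_lt {κ ε s s' : ℝ} (hκ : 0 < κ) (hε : 0 < ε) (hs : s ≤ ε) (hs' : ε < s') :
    truncPow κ ε s' < truncPow κ ε s := by
  rw [truncPow, truncPow, max_eq_right hs, max_eq_left hs'.le]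
  exact Real.rpow_lt_rpow_of_neg hε hs' (neg_neg_iff_pos.2 hκ)

lemma convexComb_pos {t a b : ℝ} (ht : t ∈ Icc (0 : ℝ) 1) (ha : 0 < a) (hb : 0 < b) :
    0 < (1 - t) * a + t * b := by
  rcases ht.1.eq_or_lt with rfl | h
  · simpa
  · have := sub_nonneg.2 ht.2
    positivity

/-- Along a segment of support functions, balanced translations stay uniformly away from the
boundary of the body. -/
lemma exists_uniform_lower_bound {n : ℕ} {θ κ : ℝ} {A B : V n → ℝ} (hκ : 0 < κ)
    (hs : 0 < Real.sin θ) (hc : 0 < Real.cos θ)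
    (hA : IsCapSupp n θ A) (hB : IsCapSupp n θ B) (hAc : Continuous A) (hBc : Continuous B)
    (hApos : ∀ u ∈ sphCap n θ, 0 < A u) (hBpos : ∀ u ∈ sphCap n θ, 0 < B u) :
    ∃ ε : ℝ, 0 < ε ∧ ∀ t ∈ Icc (0 : ℝ) 1, ∀ z : V n, z (Fin.last n) = 0 →
      (∀ u ∈ sphCap n θ, 0 ≤ (1 - t) * A u + t * B u - ⟪u, z⟫) →
      (∀ a : V n, a (Fin.last n) = 0 → ∫ u, truncPow κ ε
        ((1 - t) * A u + t * B u - ⟪u, z⟫) * ⟪u, a⟫ ∂capMeasure n θ = 0) →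
      ∀ u ∈ sphCap n θ, ε ≤ (1 - t) * A u + t * B u - ⟪u, z⟫ := by
  by_contra! H
  let f : ℝ × V n → V n → ℝ := fun p u => (1 - p.1) * A u + p.1 * B u - ⟪u, p.2⟫
  have hfc : Continuous f.uncurry := by simp only [f, Function.uncurry_def]; fun_prop
  have hd : ∀ j : ℕ, (0 : ℝ) < 1 / ((j : ℝ) + 1) := fun j => Nat.one_div_pos_of_nat
  choose t ht z hz hnn hbal u hu hlt using fun j : ℕ => H (1 / ((j : ℝ) + 1)) (hd j)
  obtain ⟨M, hM⟩ := (isCompact_sphCap n θ).bddAbove_image (hAc.add hBc).continuousOn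
  have hzb : ∀ j, z j ∈ Metric.closedBall (0 : V n) (max M 0 / Real.sin θ) := fun j => by
    refine mem_closedBall_zero_iff.2 (norm_le_of_inner_le hs (le_max_right _ _) (hz j) ?_)
    intro x hx
    have h1 : A x + B x ≤ M := hM (mem_image_of_mem _ hx)
    have h2 := hnn j x hx
    have := hApos x hx
    have := hBpos x hx
    have := (ht j).1
    have := (ht j).2
    refine le_trans ?_ (le_max_left M 0)
    nlinarith
  obtain ⟨⟨⟨t₀, z₀⟩, u₀⟩, hmem, σ, hσ, hlim⟩ :=
    ((isCompact_Icc.prod (isCompact_closedBall (0 : V n) (max M 0 / Real.sin θ))).prod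
      (isCompact_sphCap n θ)).tendsto_subseq (x := fun j => ((t j, z j), u j))
      (fun j => ⟨⟨ht j, hzb j⟩, hu j⟩)
  have ht₀ : t₀ ∈ Icc (0 : ℝ) 1 := hmem.1.1
  have hu₀ : u₀ ∈ sphCap n θ := hmem.2
  have hpl : Filter.Tendsto (fun j => (t (σ j), z (σ j))) Filter.atTop (nhds (t₀, z₀)) :=
    (continuous_fst.tendsto _).comp hlim
  have hdl : Filter.Tendsto (fun j => 1 / ((σ j : ℝ) + 1)) Filter.atTop (nhds 0) :=
    tendsto_one_div_add_atTop_nhds_zero_nat.comp hσ.tendsto_atTop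
  have hfl : ∀ x, Filter.Tendsto (fun j => f (t (σ j), z (σ j)) x) Filter.atTop
      (nhds (f (t₀, z₀) x)) := fun x =>
    ((hfc.comp (continuous_id.prodMk continuous_const)).tendsto (t₀, z₀)).comp hpl
  have hz₀ : z₀ (Fin.last n) = 0 := by
    have h1 : Continuous fun p : ℝ × V n => p.2 (Fin.last n) := by
      have : (fun p : ℝ × V n => p.2 (Fin.last n)) = fun p => ⟪p.2, Etop n⟫ := by
        ext p; rw [inner_Etop]
      rw [this]; fun_prop
    refine tendsto_nhds_unique ((h1.tendsto (t₀, z₀)).comp hpl) ?_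
    simp [Function.comp_def, hz]
  have hnn₀ : ∀ x ∈ sphCap n θ, 0 ≤ f (t₀, z₀) x := fun x hx =>
    ge_of_tendsto' (hfl x) fun j => hnn (σ j) x hx
  have h0 : f (t₀, z₀) u₀ = 0 :=
    le_antisymm (le_of_tendsto_of_tendsto' ((hfc.tendsto _).comp hlim) hdl
      fun j => (hlt (σ j)).le) (hnn₀ u₀ hu₀)
  have hsupp : IsCapSupp n θ (fun u => (1 - t₀) * A u + t₀ * B u) := hA.convexComb hB ht₀
  have hpos₀ : ∀ x ∈ sphCap n θ, 0 < (1 - t₀) * A x + t₀ * B x := fun x hx =>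
    convexComb_pos ht₀ (hApos x hx) (hBpos x hx)
  obtain ⟨e, he, he0, hrim, hdir⟩ := hsupp.exists_direction hs hc hpos₀ hz₀ hnn₀ hu₀ h0
  have hrimS := rimPt_mem n θ he he0
  have hrimE : ⟪rimPt n θ e, e⟫ = Real.sin θ := by
    rw [real_inner_comm, inner_rimPt, real_inner_self_eq_norm_sq, he, he0]; ring
  have hmirS := (mirror_mem_iff n θ he he0 _).2 hrimS
  have hmirE : ⟪mirror n e (rimPt n θ e), e⟫ ≤ 0 := by
    rw [inner_mirror n he, hrimE]; linarith
  have hPc : IsCompact (sphCap n θ ∩ {x | ⟪x, e⟫ ≤ 0}) :=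
    (isCompact_sphCap n θ).inter_right (isClosed_le (by fun_prop) continuous_const)
  obtain ⟨m, hm, hmmin⟩ := hPc.exists_isMinOn ⟨_, hmirS, hmirE⟩
    (f := f (t₀, z₀)) (by simp only [f]; fun_prop)
  have hmpos : 0 < f (t₀, z₀) m := hdir m hm.1 hm.2
  set ε := f (t₀, z₀) m / 2 with hε
  have hεpos : 0 < ε := half_pos hmpos
  have hεlt : ∀ x ∈ sphCap n θ ∩ {x | ⟪x, e⟫ ≤ 0}, ε < f (t₀, z₀) x := fun x hx =>
    (half_lt_self hmpos).trans_le (isMinOn_iff.1 hmmin x hx)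
  have hev : ∀ᶠ p in nhds (t₀, z₀), ∀ x ∈ sphCap n θ ∩ {x | ⟪x, e⟫ ≤ 0}, ε < f p x :=
    hPc.eventually_forall_of_forall_eventually fun x hx =>
      (hfc.tendsto ((t₀, z₀), x)).eventually_const_lt (hεlt x hx)
  have htrunc := continuous_truncPow (κ := κ) hεpos
  have hcont : Continuous fun p => ∫ u, truncPow κ ε (f p u) * ⟪u, e⟫ ∂capMeasure n θ :=
    continuous_integral_capMeasure (θ := θ) hc
      (F := fun p u => truncPow κ ε (f p u) * ⟪u, e⟫)
      ((htrunc.comp hfc).mul (continuous_snd.inner continuous_const))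
  have hfp : ∀ p, Continuous (f p) := fun p => by simp only [f]; fun_prop
  have hle : ∫ u, truncPow κ ε (f (t₀, z₀) u) * ⟪u, e⟫ ∂capMeasure n θ ≤ 0 := by
    refine le_of_tendsto ((hcont.tendsto (t₀, z₀)).comp hpl) ?_
    filter_upwards [hpl.eventually hev, hdl.eventually_le_const hεpos] with j hj1 hj2
    rw [← hbal (σ j) e he0]
    have htj := continuous_truncPow (κ := κ) (hd (σ j))
    refine integral_capMeasure_mono hc
      ((htrunc.comp (hfp _)).mul (by fun_prop))
      ((htj.comp (hfp (t (σ j), z (σ j)))).mul (by fun_prop)) fun x hx => ?_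
    rcases le_total 0 ⟪x, e⟫ with h | h
    · exact mul_le_mul_of_nonneg_right
        (truncPow_anti hκ (hd _) (max_le_max_left _ hj2)) h
    · have h1 := hj1 x ⟨hx, h⟩
      refine le_of_eq ?_
      simp only [truncPow, f] at h1 ⊢
      rw [max_eq_left h1.le, max_eq_left (hj2.trans h1.le)]
  have hgt := integral_mul_inner_pos (θ := θ) hs hc he he0
    (q := fun u => truncPow κ ε (f (t₀, z₀) u)) (htrunc.comp (hfp _))
    (fun x hx hxe => antitone_truncPow hκ hεpos
      ((hsupp.sub_inner hz₀).le_mirror hs hc he he0 hrim hx hxe))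
    hrimS (by rw [hrimE]; exact hs)
    (truncPow_lt hκ hεpos (hrim.trans hεpos.le) (hεlt _ ⟨hmirS, hmirE⟩))
  exact absurd hle (not_le.2 hgt)

lemma continuous_last (n : ℕ) : Continuous fun u : V n => u (Fin.last n) :=
  (EuclideanSpace.proj (𝕜 := ℝ) (Fin.last n)).continuous

lemma mem_coneCap_of_le {n : ℕ} {θ : ℝ} {y : V n} (hy : y ≠ 0)
    (h : Real.cos θ * ‖y‖ ≤ y (Fin.last n)) :
    ‖y‖⁻¹ • y ∈ sphCap n θ ∧ y = ‖y‖ • (‖y‖⁻¹ • y) := by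
  have hp : 0 < ‖y‖ := norm_pos_iff.2 hy
  refine ⟨⟨norm_smul_inv_norm hy, ?_⟩, by rw [smul_smul, mul_inv_cancel₀ hp.ne', one_smul]⟩
  simp only [PiLp.smul_apply, smul_eq_mul]
  rw [inv_mul_eq_div, le_div_iff₀ hp]
  exact h

lemma sphCap_subset_coneCap (n : ℕ) (θ : ℝ) : sphCap n θ ⊆ coneCap n θ :=
  fun u hu => ⟨1, one_pos, u, hu, (one_smul ℝ u).symm⟩

section Convexity

variable {n : ℕ} {θ : ℝ} {G : V n → ℝ} {U : Set (V n)}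

lemma fderiv_self_of_homogeneous (hU : IsOpen U) (hcone : coneCap n θ ⊆ U)
    (hG : ContDiffOn ℝ 2 G U)
    (hhom : ∀ l : ℝ, 0 < l → ∀ u ∈ sphCap n θ, G (l • u) = l * G u)
    {u : V n} (hu : u ∈ sphCap n θ) : fderiv ℝ G u u = G u := by
  have huU : u ∈ U := hcone (sphCap_subset_coneCap n θ hu)
  have hd : HasFDerivAt G (fderiv ℝ G u) ((1 : ℝ) • u) := by
    rw [one_smul]
    exact ((hG.contDiffAt (hU.mem_nhds huU)).differentiableAt two_ne_zero).hasFDerivAt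
  have h1 : HasDerivAt (fun l : ℝ => G (l • u)) (fderiv ℝ G u u) 1 := by
    have := hd.comp_hasDerivAt (1 : ℝ) ((hasDerivAt_id (1 : ℝ)).smul_const u)
    simpa [Function.comp_def] using this
  have h2 : HasDerivAt (fun l : ℝ => G (l • u)) (G u) 1 := by
    have h3 : HasDerivAt (fun l : ℝ => l * G u) (G u) 1 := by
      simpa using (hasDerivAt_id (1 : ℝ)).mul_const (G u)
    refine h3.congr_of_eventuallyEq ?_
    filter_upwards [lt_mem_nhds (zero_lt_one' ℝ)] with l hl using hhom l hl u hu
  exact h1.unique h2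

lemma hessQ_nonneg_of_mem_interior (hU : IsOpen U) (hcone : coneCap n θ ⊆ U)
    (hG : ContDiffOn ℝ 2 G U)
    (hhom : ∀ l : ℝ, 0 < l → ∀ u ∈ sphCap n θ, G (l • u) = l * G u)
    (hτ : TauNonneg n θ G) {y : V n}
    (hy : Real.cos θ * ‖y‖ < y (Fin.last n)) (v : V n) : 0 ≤ hessQ n G y v v := by
  let O : Set (V n) := {x | Real.cos θ * ‖x‖ < x (Fin.last n)}
  have hO : IsOpen O := isOpen_lt (by fun_prop) (continuous_last n)
  have hne : ∀ x ∈ O, x ≠ 0 := by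
    rintro x hx rfl
    simp [O] at hx
  have hOU : ∀ x ∈ O, x ∈ U := fun x hx => by
    obtain ⟨h1, h2⟩ := mem_coneCap_of_le (hne x hx) (le_of_lt hx)
    exact hcone ⟨_, norm_pos_iff.2 (hne x hx), _, h1, h2⟩
  set r := ‖y‖ with hr
  have hrp : 0 < r := norm_pos_iff.2 (hne y hy)
  have hyr : y = r • (r⁻¹ • y) := by rw [smul_smul, mul_inv_cancel₀ hrp.ne', one_smul]
  set w := r⁻¹ • y with hw
  have hwS : w ∈ sphCap n θ := (mem_coneCap_of_le (hne y hy) (le_of_lt hy)).1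
  have hwO : w ∈ O := by
    change _ * ‖r⁻¹ • y‖ < (r⁻¹ • y) (Fin.last n)
    rw [norm_smul, norm_inv, Real.norm_of_nonneg hrp.le]
    simp only [PiLp.smul_apply, smul_eq_mul]
    nlinarith [mul_lt_mul_of_pos_left hy (inv_pos.2 hrp)]
  have hscale : ∀ x ∈ O, G (r • x) = r * G x := fun x hx => by
    obtain ⟨h1, h2⟩ := mem_coneCap_of_le (hne x hx) (le_of_lt hx)
    have hxp := norm_pos_iff.2 (hne x hx)
    conv_lhs => rw [h2, smul_smul]
    conv_rhs => rw [h2]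
    rw [hhom _ (mul_pos hrp hxp) _ h1, hhom _ hxp _ h1, mul_assoc]
  have hfd : ∀ x ∈ O, fderiv ℝ G (r • x) = fderiv ℝ G x := fun x hx => by
    have h1 : (fun x => G (r • x)) =ᶠ[nhds x] fun x => r • G x :=
      Filter.eventually_of_mem (hO.mem_nhds hx) hscale
    have h2 := h1.fderiv_eq (𝕜 := ℝ)
    have h3 := fderiv_comp_smul (𝕜 := ℝ) (f := G) (x := x) r
    have h4 := fderiv_fun_const_smul ((hG.contDiffAt
      (hU.mem_nhds (hOU x hx))).differentiableAt two_ne_zero) r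
    rw [h4] at h2
    have h5 : r • fderiv ℝ G (r • x) = r • fderiv ℝ G x := h3.symm.trans h2
    exact smul_right_injective (V n →L[ℝ] ℝ) hrp.ne' h5
  have h1 : (fun x => fderiv ℝ G (r • x)) =ᶠ[nhds w] fderiv ℝ G :=
    Filter.eventually_of_mem (hO.mem_nhds hwO) hfd
  have h2 := h1.fderiv_eq (𝕜 := ℝ)
  have h3 := fderiv_comp_smul (𝕜 := ℝ) (f := fderiv ℝ G) (x := w) r
  have h4 : r • fderiv ℝ (fderiv ℝ G) y = fderiv ℝ (fderiv ℝ G) w := by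
    rw [← h2, hyr]; exact h3.symm
  have h5 := hτ w hwS v
  rw [hessQ, ← h4] at h5
  simp only [_root_.smul_apply, smul_eq_mul] at h5
  exact nonneg_of_mul_nonneg_right h5 hrp

lemma fderiv_apply_le (hU : IsOpen U) (hcone : coneCap n θ ⊆ U)
    (hG : ContDiffOn ℝ 2 G U)
    (hhom : ∀ l : ℝ, 0 < l → ∀ u ∈ sphCap n θ, G (l • u) = l * G u)
    (hτ : TauNonneg n θ G) (hc : 0 < Real.cos θ) {u x : V n} (hu : u ∈ sphCap n θ)
    (hx : x ∈ sphCap n θ) : fderiv ℝ G u x ≤ G x := by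
  have hEuler := fderiv_self_of_homogeneous hU hcone hG hhom hu
  rcases eq_or_ne u x with rfl | hne
  · exact hEuler.le
  let y : ℝ → V n := fun s => u + s • (x - u)
  have hyd : ∀ s, HasDerivAt y (x - u) s := fun s => by
    have := ((hasDerivAt_id s).smul_const (x - u)).const_add u
    rw [one_smul] at this
    exact this
  have hyc : ∀ s, y s = (1 - s) • u + s • x := fun s => by simp only [y]; module
  have hlast : ∀ s ∈ Icc (0 : ℝ) 1, Real.cos θ ≤ y s (Fin.last n) := fun s hs => by
    rw [hyc]
    simp only [PiLp.add_apply, PiLp.smul_apply, smul_eq_mul]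
    nlinarith [hu.2, hx.2, hs.1, hs.2]
  have hnorm : ∀ s ∈ Icc (0 : ℝ) 1, ‖y s‖ ≤ 1 := fun s hs => by
    rw [hyc]
    refine (norm_add_le _ _).trans ?_
    rw [norm_smul, norm_smul, hu.1, hx.1, Real.norm_of_nonneg hs.1,
      Real.norm_of_nonneg (sub_nonneg.2 hs.2)]
    linarith
  have hnorm' : ∀ s ∈ Ioo (0 : ℝ) 1, ‖y s‖ < 1 := fun s hs => by
    rw [hyc]
    exact norm_combo_lt_of_ne hu.1.le hx.1.le hne (sub_pos.2 hs.2) hs.1 (by ring)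
  have hyU : ∀ s ∈ Icc (0 : ℝ) 1, y s ∈ U := fun s hs => by
    have hy0 : y s ≠ 0 := fun h => by
      have := hlast s hs
      rw [h] at this
      exact absurd hc (not_lt.2 this)
    obtain ⟨h1, h2⟩ := mem_coneCap_of_le (θ := θ) hy0
      ((mul_le_of_le_one_right hc.le (hnorm s hs)).trans (hlast s hs))
    exact hcone ⟨_, norm_pos_iff.2 hy0, _, h1, h2⟩
  have hcd : ∀ s ∈ Icc (0 : ℝ) 1, ContDiffAt ℝ 2 G (y s) := fun s hs =>
    hG.contDiffAt (hU.mem_nhds (hyU s hs))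
  let d : ℝ → ℝ := fun s => fderiv ℝ G (y s) (x - u)
  have hg : ∀ s ∈ Icc (0 : ℝ) 1, HasDerivAt (fun s => G (y s)) (d s) s := fun s hs =>
    ((hcd s hs).differentiableAt two_ne_zero).hasFDerivAt.comp_hasDerivAt s (hyd s)
  have hd : ∀ s ∈ Icc (0 : ℝ) 1, HasDerivAt d (hessQ n G (y s) (x - u) (x - u)) s :=
    fun s hs => by
      have h1 : HasFDerivAt (fderiv ℝ G) (fderiv ℝ (fderiv ℝ G) (y s)) (y s) :=
        (((hcd s hs).fderiv_right (m := 1) (by norm_num)).differentiableAt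
          one_ne_zero).hasFDerivAt
      have h2 := (h1.comp_hasDerivAt s (hyd s)).clm_apply (hasDerivAt_const s (x - u))
      exact h2.congr_deriv (by simp only [hessQ, map_zero, add_zero])
  have hmono : MonotoneOn d (Icc 0 1) := by
    refine monotoneOn_of_deriv_nonneg (convex_Icc 0 1)
      (fun s hs => (hd s hs).continuousAt.continuousWithinAt) ?_ ?_
    · intro s hs
      rw [interior_Icc] at hs
      exact (hd s (Ioo_subset_Icc_self hs)).differentiableAt.differentiableWithinAt
    · intro s hs
      rw [interior_Icc] at hs
      have hs' := Ioo_subset_Icc_self hs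
      rw [(hd s hs').deriv]
      exact hessQ_nonneg_of_mem_interior hU hcone hG hhom hτ
        ((mul_lt_of_lt_one_right hc (hnorm' s hs)).trans_le (hlast s hs')) _
  obtain ⟨s, hs, hslope⟩ := exists_hasDerivAt_eq_slope (fun s => G (y s)) d zero_lt_one
    (fun s hs => (hg s hs).continuousAt.continuousWithinAt)
    (fun s hs => hg s (Ioo_subset_Icc_self hs))
  have h1 := hmono (left_mem_Icc.2 zero_le_one) (Ioo_subset_Icc_self hs) hs.1.le
  rw [hslope] at h1
  simp only [d, y, zero_smul, add_zero, one_smul, add_sub_cancel, sub_zero, div_one,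
    map_sub, hEuler] at h1
  linarith

/-- A smooth convex capillary function is a capillary support function. -/
lemma isCapSupp_of_tauNonneg (hU : IsOpen U) (hcone : coneCap n θ ⊆ U)
    (hG : ContDiffOn ℝ 2 G U)
    (hhom : ∀ l : ℝ, 0 < l → ∀ u ∈ sphCap n θ, G (l • u) = l * G u)
    (hτ : TauNonneg n θ G) (hcap : IsCapillaryF n θ G) (hs : 0 < Real.sin θ)
    (hc : 0 < Real.cos θ) (hpos : ∀ u ∈ sphCap n θ, 0 < G u) : IsCapSupp n θ G := by
  intro u hu
  have hEuler : ∀ {u : V n}, u ∈ sphCap n θ → fderiv ℝ G u u = G u := fun hu =>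
    fderiv_self_of_homogeneous hU hcone hG hhom hu
  have hle : ∀ {u x : V n}, u ∈ sphCap n θ → x ∈ sphCap n θ → fderiv ℝ G u x ≤ G x :=
    fun hu hx => fderiv_apply_le hU hcone hG hhom hτ hc hu hx
  let p : V n := (InnerProductSpace.toDual ℝ (V n)).symm (fderiv ℝ G u)
  have hp : ∀ x, ⟪p, x⟫ = fderiv ℝ G u x := fun x =>
    InnerProductSpace.toDual_symm_apply
  have hrim : u (Fin.last n) = Real.cos θ → p (Fin.last n) = 0 := fun h => by
    rw [← inner_Etop, hp]; exact hcap u ⟨hu.1, h⟩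
  refine ⟨p, by rw [hp, hEuler hu], fun x hx => by rw [hp]; exact hle hu hx, ?_, hrim⟩
  rcases hu.2.eq_or_lt with hb | hb
  · exact (hrim hb.symm).ge
  rw [← inner_Etop, hp]
  set b := u (Fin.last n) with hbdef
  set a := u - b • Etop n with ha
  have ha0 : a (Fin.last n) = 0 := by simp [ha, Etop_last, hbdef]
  have hua : u = a + b • Etop n := by simp [ha]
  rcases eq_or_ne a 0 with h0 | hane
  · have h1 : u = b • Etop n := by rw [hua, h0, zero_add]
    have h2 := hEuler hu
    have h3 := hpos u hu
    rw [← h2] at h3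
    nth_rw 2 [h1] at h3
    rw [map_smul, smul_eq_mul] at h3
    exact (pos_of_mul_pos_right h3 (hc.trans hb).le).le
  have hap := norm_pos_iff.2 hane
  have he : ‖‖a‖⁻¹ • a‖ = 1 := norm_smul_inv_norm hane
  set e := ‖a‖⁻¹ • a with hedef
  have he0 : e (Fin.last n) = 0 := by simp [hedef, ha0]
  have hae : a = ‖a‖ • e := by simp [hedef, smul_smul, hap.ne']
  have hR := rimPt_mem n θ he he0
  set α := ‖a‖ / Real.sin θ with hα
  have hαs : α * Real.sin θ = ‖a‖ := div_mul_cancel₀ _ hs.ne'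
  have hudec : u = α • rimPt n θ e + (b - α * Real.cos θ) • Etop n := by
    conv_lhs => rw [hua]
    rw [rimPt, smul_add, smul_smul, hαs, ← hae, smul_smul, sub_smul]
    abel
  have hnorm : ‖a‖ ^ 2 + b ^ 2 = 1 := by
    have h1 : ⟪a, Etop n⟫ = 0 := by rw [inner_Etop, ha0]
    have h2 : ‖u‖ ^ 2 = ‖a‖ ^ 2 + b ^ 2 := by
      rw [hua, norm_add_sq_real, inner_smul_right, h1, norm_smul, norm_Etop]
      simp
    rw [← h2, hu.1, one_pow]
  have hcoef : 0 < b - α * Real.cos θ := by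
    have h1 := Real.sin_sq_add_cos_sq θ
    have h2 : ‖a‖ < Real.sin θ := by nlinarith
    have h3 : α < 1 := (div_lt_one hs).2 h2
    nlinarith
  have h1 := hEuler hu
  nth_rw 2 [hudec] at h1
  rw [map_add, map_smul, map_smul, smul_eq_mul, smul_eq_mul] at h1
  have h2 := hle hR hu
  rw [hudec, map_add, map_smul, map_smul, hcap _ ⟨hR.1, rimPt_last n θ he0⟩, hEuler hR,
    ← hudec, smul_eq_mul, smul_zero, add_zero] at h2
  have h3 := mul_le_mul_of_nonneg_left (hle hu hR) (div_nonneg hap.le hs.le)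
  rw [← hα] at h3
  have h4 : 0 ≤ (b - α * Real.cos θ) * fderiv ℝ G u (Etop n) := by linarith
  exact nonneg_of_mul_nonneg_right h4 hcoef

end Convexity

/-- The support function of the unit cap. -/
def capSupp (n : ℕ) (θ : ℝ) (x : V n) : ℝ := ‖x‖ - Real.cos θ * x (Fin.last n)

lemma continuous_capSupp (n : ℕ) (θ : ℝ) : Continuous (capSupp n θ) :=
  continuous_norm.sub (continuous_const.mul (continuous_last n))

lemma isCapSupp_capSupp (n : ℕ) (θ : ℝ) : IsCapSupp n θ (capSupp n θ) := by
  intro u hu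
  have hin : ∀ x, ⟪u - Real.cos θ • Etop n, x⟫ = ⟪u, x⟫ - Real.cos θ * x (Fin.last n) :=
    fun x => by rw [inner_sub_left, real_inner_smul_left, real_inner_comm x (Etop n), inner_Etop]
  have hl : (u - Real.cos θ • Etop n) (Fin.last n) = u (Fin.last n) - Real.cos θ := by
    simp [Etop_last]
  refine ⟨u - Real.cos θ • Etop n, ?_, fun x hx => ?_, ?_, fun h => ?_⟩
  · rw [hin, real_inner_self_eq_norm_sq, capSupp, hu.1, one_pow]
  · rw [hin, capSupp]
    have := real_inner_le_norm u x
    rw [hu.1, one_mul] at this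
    linarith
  · rw [hl]; exact sub_nonneg.2 hu.2
  · rw [hl, h, sub_self]

lemma capSupp_pos {n : ℕ} {θ : ℝ} (hc : 0 < Real.cos θ) (hc1 : Real.cos θ < 1) {u : V n}
    (hu : u ∈ sphCap n θ) : 0 < capSupp n θ u := by
  have h := (le_abs_self _).trans (PiLp.norm_apply_le u (Fin.last n))
  rw [hu.1] at h
  rw [capSupp, hu.1]
  nlinarith

section Path

variable {n : ℕ} {θ κ : ℝ} {A B : V n → ℝ}

/-- The balanced translations along a segment of support functions with balanced endpoints. -/
lemma exists_balanced_path (hκ : 0 < κ) (hs : 0 < Real.sin θ) (hc : 0 < Real.cos θ)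
    (hA : IsCapSupp n θ A) (hB : IsCapSupp n θ B) (hAc : Continuous A) (hBc : Continuous B)
    (hApos : ∀ u ∈ sphCap n θ, 0 < A u) (hBpos : ∀ u ∈ sphCap n θ, 0 < B u)
    (hAbal : ∀ a : V n, a (Fin.last n) = 0 →
      ∫ u, A u ^ (-κ) * ⟪u, a⟫ ∂capMeasure n θ = 0)
    (hBbal : ∀ a : V n, a (Fin.last n) = 0 →
      ∫ u, B u ^ (-κ) * ⟪u, a⟫ ∂capMeasure n θ = 0) :
    ∃ z : ℝ → V n, z 0 = 0 ∧ z 1 = 0 ∧ ∃ m M : ℝ, 0 < m ∧ ∀ t ∈ Icc (0 : ℝ) 1,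
      (z t) (Fin.last n) = 0 ∧
      (∀ u ∈ sphCap n θ, (1 - t) * A u + t * B u - ⟪u, z t⟫ ∈ Icc m M) ∧
      ∀ a : V n, a (Fin.last n) = 0 →
        ∫ u, ((1 - t) * A u + t * B u - ⟪u, z t⟫) ^ (-κ) * ⟪u, a⟫ ∂capMeasure n θ = 0 := by
  obtain ⟨ε, hε, hlow⟩ := exists_uniform_lower_bound hκ hs hc hA hB hAc hBc hApos hBpos
  obtain ⟨N, hN⟩ := (isCompact_sphCap n θ).bddAbove_image (hAc.add hBc).continuousOn
  have hN' : ∀ u ∈ sphCap n θ, A u + B u ≤ N := fun u hu => hN (mem_image_of_mem _ hu)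
  have hmin : ∀ {g : V n → ℝ}, Continuous g → (∀ u ∈ sphCap n θ, 0 < g u) →
      ∃ m, 0 < m ∧ ∀ u ∈ sphCap n θ, m ≤ g u := fun {g} hg hpos =>
    (isCompact_sphCap n θ).exists_forall_le' hg.continuousOn hpos
  obtain ⟨mA, hmA, hmA'⟩ := hmin hAc hApos
  obtain ⟨mB, hmB, hmB'⟩ := hmin hBc hBpos
  set R := max N 0 / Real.sin θ with hR
  have hR0 : 0 ≤ R := div_nonneg (le_max_right _ _) hs.le
  have key : ∀ t : ℝ, ∃ z : V n, (t = 0 ∨ t = 1 → z = 0) ∧ (t ∈ Icc (0 : ℝ) 1 →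
      z (Fin.last n) = 0 ∧
      (∀ u ∈ sphCap n θ, (1 - t) * A u + t * B u - ⟪u, z⟫ ∈ Icc (min ε (min mA mB)) (N + R)) ∧
      ∀ a : V n, a (Fin.last n) = 0 →
        ∫ u, ((1 - t) * A u + t * B u - ⟪u, z⟫) ^ (-κ) * ⟪u, a⟫ ∂capMeasure n θ = 0) := by
    intro t
    by_cases h0 : t = 0
    · refine ⟨0, fun _ => rfl, fun _ => ⟨rfl, fun u hu => ?_, fun a ha => ?_⟩⟩
      · have h1 := min_le_right ε (min mA mB)
        have h2 := min_le_left mA mB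
        have h3 := hmA' u hu
        have h4 := hN' u hu
        have h5 := hBpos u hu
        simp only [h0, inner_zero_right]
        constructor <;> linarith
      · simpa [h0] using hAbal a ha
    by_cases h1 : t = 1
    · refine ⟨0, fun _ => rfl, fun _ => ⟨rfl, fun u hu => ?_, fun a ha => ?_⟩⟩
      · have h1' := min_le_right ε (min mA mB)
        have h2 := min_le_right mA mB
        have h3 := hmB' u hu
        have h4 := hN' u hu
        have h5 := hApos u hu
        simp only [h1, inner_zero_right]
        constructor <;> linarith
      · simpa [h1] using hBbal a ha
    by_cases ht : t ∈ Icc (0 : ℝ) 1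
    · obtain ⟨z, hz, hnn, hbal⟩ := (hA.convexComb hB ht).exists_balanced hs hc (by fun_prop)
        (fun u hu => convexComb_pos ht (hApos u hu) (hBpos u hu))
        (continuous_truncPow (κ := κ) hε) (antitone_truncPow hκ hε)
      have hge := hlow t ht z hz hnn hbal
      have hfN : ∀ u ∈ sphCap n θ, (1 - t) * A u + t * B u ≤ N := fun u hu => by
        nlinarith [hN' u hu, hApos u hu, hBpos u hu, ht.1, ht.2]
      have hzR : ‖z‖ ≤ R := norm_le_of_inner_le hs (le_max_right _ _) hz fun u hu =>
        (sub_nonneg.1 (hnn u hu)).trans ((hfN u hu).trans (le_max_left _ _))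
      refine ⟨z, fun h => absurd h (by simp [h0, h1]), fun _ => ⟨hz, fun u hu =>
        ⟨(min_le_left _ _).trans (hge u hu), ?_⟩, fun a ha => ?_⟩⟩
      · have h2 := neg_le_of_abs_le (abs_real_inner_le_norm u z)
        rw [hu.1, one_mul] at h2
        linarith [hfN u hu]
      · rw [← hbal a ha]
        refine integral_congr_ae ((ae_mem_sphCap n θ).mono fun u hu => ?_)
        simp only [truncPow, max_eq_left (hge u hu)]
    · exact ⟨0, fun _ => rfl, fun h => absurd h ht⟩
  choose z hz1 hz2 using key
  exact ⟨z, hz1 0 (Or.inl rfl), hz1 1 (Or.inr rfl), _, _, lt_min hε (lt_min hmA hmB), hz2⟩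

lemma integral_capSupp_rpow_mul_inner (a : V n) (ha : a (Fin.last n) = 0) :
    ∫ u, capSupp n θ u ^ (-κ) * ⟪u, a⟫ ∂capMeasure n θ = 0 := by
  rcases eq_or_ne a 0 with rfl | hne
  · simp
  have he : ‖‖a‖⁻¹ • a‖ = 1 := norm_smul_inv_norm hne
  have he0 : (‖a‖⁻¹ • a) (Fin.last n) = 0 := by simp [ha]
  have h := integral_mirror (θ := θ) he he0 fun u => capSupp n θ u ^ (-κ) * ⟪u, ‖a‖⁻¹ • a⟫
  have hmir : ∀ u, capSupp n θ (mirror n (‖a‖⁻¹ • a) u) = capSupp n θ u := fun u => by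
    rw [capSupp, LinearIsometryEquiv.norm_map, mirror_last n he he0, capSupp]
  simp only [hmir, inner_mirror n he, mul_neg, integral_neg, inner_smul_right,
    mul_left_comm _ (‖a‖⁻¹), integral_const_mul] at h
  have hp := inv_pos.2 (norm_pos_iff.2 hne)
  have h2 := mul_eq_zero.1 (self_eq_neg.1 h.symm)
  exact h2.resolve_left hp.ne'

end Path

section Hessian

variable {n : ℕ}

lemma fderiv_norm_eq {x : V n} (hx : x ≠ 0) :
    fderiv ℝ (fun y : V n => ‖y‖) x = ‖x‖⁻¹ • innerSL ℝ x := by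
  have hp := norm_pos_iff.2 hx
  have h := ((hasStrictFDerivAt_norm_sq x).hasFDerivAt.sqrt (by positivity)).fderiv
  simp only [Real.sqrt_sq (norm_nonneg _)] at h
  rw [h]
  ext v
  simp
  field_simp

lemma hessQ_norm_nonneg {u : V n} (hu : ‖u‖ = 1) (v : V n) :
    0 ≤ hessQ n (fun y : V n => ‖y‖) u v v := by
  have hu0 : u ≠ 0 := norm_ne_zero_iff.1 (by rw [hu]; exact one_ne_zero)
  have h1 : fderiv ℝ (fun y : V n => ‖y‖) =ᶠ[nhds u] fun x => ‖x‖⁻¹ • innerSL ℝ x := by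
    filter_upwards [isOpen_ne.mem_nhds hu0] with x hx using fderiv_norm_eq hx
  have h2 : HasFDerivAt (fun y : V n => ‖y‖) (innerSL ℝ u) u := by
    have := ((contDiffAt_norm ℝ hu0 (n := 1)).differentiableAt one_ne_zero).hasFDerivAt
    rwa [fderiv_norm_eq hu0, hu, inv_one, one_smul] at this
  have h3 := ((hasDerivAt_inv (by rw [hu]; exact one_ne_zero)).comp_hasFDerivAt u h2).smul
    (innerSL ℝ (E := V n)).hasFDerivAt
  rw [hessQ, h1.fderiv_eq,
    (show HasFDerivAt (fun x : V n => ‖x‖⁻¹ • innerSL ℝ x) _ u from h3).fderiv]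
  have h4 := abs_real_inner_le_norm u v
  rw [hu, one_mul] at h4
  have h5 := sq_le_sq' (neg_le_of_abs_le h4) (le_of_abs_le h4)
  simp [hu]
  rw [innerSL_apply_apply, innerSL_apply_apply, real_inner_self_eq_norm_sq]
  linarith

lemma fderiv_combo {f g : V n → ℝ} (a b : ℝ) (L : V n →L[ℝ] ℝ) {x : V n}
    (hf : DifferentiableAt ℝ f x) (hg : DifferentiableAt ℝ g x) :
    fderiv ℝ (fun y => a * f y + b * g y + L y) x = a • fderiv ℝ f x + b • fderiv ℝ g x + L :=
  (((hf.hasFDerivAt.const_mul a).add (hg.hasFDerivAt.const_mul b)).add L.hasFDerivAt).fderiv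

lemma hessQ_combo {f g : V n → ℝ} (a b : ℝ) (L : V n →L[ℝ] ℝ) {u : V n}
    (hf : ContDiffAt ℝ 2 f u) (hg : ContDiffAt ℝ 2 g u) (v w : V n) :
    hessQ n (fun y => a * f y + b * g y + L y) u v w = a * hessQ n f u v w + b * hessQ n g u v w := by
  have hd : ∀ {f : V n → ℝ}, ContDiffAt ℝ 2 f u → ∀ᶠ x in nhds u, DifferentiableAt ℝ f x :=
    fun hf => (hf.eventually (by simp)).mono fun x hx => hx.differentiableAt two_ne_zero
  have h1 : fderiv ℝ (fun y => a * f y + b * g y + L y) =ᶠ[nhds u]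
      fun x => a • fderiv ℝ f x + b • fderiv ℝ g x + L := by
    filter_upwards [hd hf, hd hg] with x h1 h2 using fderiv_combo a b L h1 h2
  have hd2 : ∀ {f : V n → ℝ}, ContDiffAt ℝ 2 f u →
      HasFDerivAt (fderiv ℝ f) (fderiv ℝ (fderiv ℝ f) u) u := fun hf =>
    ((hf.fderiv_right (m := 1) (by norm_num)).differentiableAt one_ne_zero).hasFDerivAt
  have h2 := ((((hd2 hf).const_smul a).add ((hd2 hg).const_smul b)).add_const L).fderiv
  rw [hessQ, h1.fderiv_eq]
  erw [h2]
  simp [hessQ]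

end Hessian

section Coordinates

variable {n : ℕ} {θ : ℝ}

lemma sub_mem_capCap {u : V n} (hu : u ∈ sphCap n θ) :
    u - Real.cos θ • Etop n ∈ capCap n θ := by
  refine ⟨?_, by rw [sub_add_cancel]; exact hu.1⟩
  have := hu.2
  simp [Etop_last, this]

lemma add_mem_sphCap {ζ : V n} (hζ : ζ ∈ capCap n θ) :
    ζ + Real.cos θ • Etop n ∈ sphCap n θ := by
  refine ⟨hζ.2, ?_⟩
  have := hζ.1
  simp [Etop_last, this]

lemma ne_zero_of_mem_sphCap {u : V n} (hu : u ∈ sphCap n θ) : u ≠ 0 :=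
  norm_ne_zero_iff.1 (by rw [hu.1]; exact one_ne_zero)

lemma sub_smul_Etop_apply {i : Fin (n + 1)} (hi : i ≠ Fin.last n) (c : ℝ) (u : V n) :
    (u - c • Etop n) i = u i := by
  simp [Etop, hi]

lemma capSupp_eq {u : V n} (hu : u ∈ sphCap n θ) : capSupp n θ u =
    Real.sin θ ^ 2 - Real.cos θ * (u - Real.cos θ • Etop n) (Fin.last n) := by
  rw [capSupp, hu.1, Real.sin_sq]
  simp only [PiLp.sub_apply, PiLp.smul_apply, Etop_last, smul_eq_mul]
  ring

lemma IsCapSupp.congr {f g : V n → ℝ} (hf : IsCapSupp n θ f)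
    (h : ∀ u ∈ sphCap n θ, g u = f u) : IsCapSupp n θ g := by
  intro u hu
  obtain ⟨p, hp1, hp2, hp3⟩ := hf u hu
  exact ⟨p, by rw [h u hu, hp1], fun x hx => by rw [h x hx]; exact hp2 x hx, hp3⟩

lemma integral_mul_inner_eq_zero (hc : 0 < Real.cos θ) {q : V n → ℝ}
    (hq : ContinuousOn q (sphCap n θ))
    (h : ∀ i, i ≠ Fin.last n → ∫ u, q u * u i ∂capMeasure n θ = 0) {a : V n}
    (ha : a (Fin.last n) = 0) : ∫ u, q u * ⟪u, a⟫ ∂capMeasure n θ = 0 := by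
  have hi : ∀ i, Integrable (fun u : V n => q u * u i) (capMeasure n θ) := fun i =>
    integrable_capMeasure_of_continuousOn hc
      (hq.mul (EuclideanSpace.proj (𝕜 := ℝ) i).continuous.continuousOn)
  have h1 : ∀ u : V n, q u * ⟪u, a⟫ = ∑ i, a i * (q u * u i) := fun u => by
    rw [PiLp.inner_apply, Finset.mul_sum]
    refine Finset.sum_congr rfl fun i _ => ?_
    simp only [RCLike.inner_apply, conj_trivial]
    ring
  simp only [h1]
  rw [integral_finsetSum _ fun i _ => (hi i).const_mul (a i)]
  refine Finset.sum_eq_zero fun i _ => ?_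
  rw [integral_const_mul]
  rcases eq_or_ne i (Fin.last n) with rfl | hne
  · rw [ha, zero_mul]
  · rw [h i hne, mul_zero]

lemma homotopy_eq (Ψ : V n → ℝ) (z : V n) (c t : ℝ) :
    (fun x : V n => (1 - t) * (‖x‖ - c * x (Fin.last n)) + t * Ψ x - ⟪x, z⟫) =
      fun x => (1 - t) * ‖x‖ + t * Ψ x +
        (-((1 - t) * c) • EuclideanSpace.proj (𝕜 := ℝ) (Fin.last n) - innerSL ℝ z :
          V n →L[ℝ] ℝ) x := by
  ext x
  simp [real_inner_comm z x]
  ring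

end Coordinates

/-- the homotopy path for the continuity method. -/
theorem capillary_homotopy_path (n k : ℕ) (hn : 2 ≤ n) (θ : ℝ)
    (hθ : θ ∈ Ioo 0 (π / 2)) (hk : 1 ≤ k) (hkn : k < n)
    (φ Φ Ψ : V n → ℝ)
    (hφpos : ∀ ζ ∈ capCap n θ, 0 < φ ζ)
    (hΦ : IsHomExt n θ ⊤ φ Φ)
    (hΨ : IsHomExt n θ ⊤ (fun ζ => φ ζ ^ (-(1 : ℝ) / k)) Ψ)
    (hτΨ : TauNonneg n θ Ψ)
    (hΨcap : IsCapillaryF n θ Ψ)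
    (hint : ∀ i : Fin (n + 1), i ≠ Fin.last n →
      ∫ ζ in capCap n θ, φ ζ * ζ i ∂μH[(n : ℝ)] = 0) :
    ∃ z : ℝ → V n, z 0 = 0 ∧ z 1 = 0 ∧
      (∀ t ∈ Icc (0 : ℝ) 1,
        (z t) (Fin.last n) = 0 ∧
        (∀ ζ ∈ capCap n θ,
          0 < (1 - t) * (Real.sin θ ^ 2 - Real.cos θ * ζ (Fin.last n)) +
                t * φ ζ ^ (-(1 : ℝ) / k) - ⟪ζ, z t⟫) ∧
        TauNonneg n θ (fun x =>
          (1 - t) * (‖x‖ - Real.cos θ * x (Fin.last n)) + t * Ψ x - ⟪x, z t⟫) ∧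
        IsCapillaryF n θ (fun x =>
          (1 - t) * (‖x‖ - Real.cos θ * x (Fin.last n)) + t * Ψ x - ⟪x, z t⟫) ∧
        (∀ i : Fin (n + 1), i ≠ Fin.last n →
          ∫ ζ in capCap n θ,
            ((1 - t) * (Real.sin θ ^ 2 - Real.cos θ * ζ (Fin.last n)) +
              t * φ ζ ^ (-(1 : ℝ) / k) - ⟪ζ, z t⟫) ^ (-(k : ℝ)) * ζ i ∂μH[(n : ℝ)] = 0)) ∧
      (∃ C : ℝ, 1 ≤ C ∧ ∀ t ∈ Icc (0 : ℝ) 1, ∀ ζ ∈ capCap n θ,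
        1 / C ≤ ((1 - t) * (Real.sin θ ^ 2 - Real.cos θ * ζ (Fin.last n)) +
                  t * φ ζ ^ (-(1 : ℝ) / k) - ⟪ζ, z t⟫) ^ (-(k : ℝ)) ∧
        ((1 - t) * (Real.sin θ ^ 2 - Real.cos θ * ζ (Fin.last n)) +
          t * φ ζ ^ (-(1 : ℝ) / k) - ⟪ζ, z t⟫) ^ (-(k : ℝ)) ≤ C) := by
  have hs : 0 < Real.sin θ := Real.sin_pos_of_pos_of_lt_pi hθ.1 (by linarith [hθ.2, Real.pi_pos])
  have hc : 0 < Real.cos θ := Real.cos_pos_of_mem_Ioo ⟨by linarith [hθ.1, Real.pi_pos], hθ.2⟩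
  have hc1 : Real.cos θ < 1 := by nlinarith [Real.sin_sq_add_cos_sq θ, pow_pos hs 2]
  have hκ : (0 : ℝ) < k := Nat.cast_pos.2 hk
  obtain ⟨⟨U, hU, hcone, hsm⟩, hhom, hval⟩ := hΨ
  have hG : ContDiffOn ℝ 2 Ψ U := hsm.of_le (WithTop.coe_le_coe.2 (le_top : (2 : ℕ∞) ≤ ⊤))
  have hcap : ∀ {u : V n}, u ∈ sphCap n θ → u - Real.cos θ • Etop n ∈ capCap n θ :=
    sub_mem_capCap
  have hΨval : ∀ {u : V n}, u ∈ sphCap n θ →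
      Ψ u = φ (u - Real.cos θ • Etop n) ^ (-(1 : ℝ) / k) := fun hu => by
    have := hval _ (hcap hu)
    rwa [sub_add_cancel] at this
  have hΨpos : ∀ u ∈ sphCap n θ, 0 < Ψ u := fun u hu => by
    rw [hΨval hu]
    exact Real.rpow_pos_of_pos (hφpos _ (hcap hu)) _
  have hSU : sphCap n θ ⊆ U := (sphCap_subset_coneCap n θ).trans hcone
  obtain ⟨B, hB⟩ := ContinuousMap.exists_restrict_eq (isCompact_sphCap n θ).isClosed
    ⟨(sphCap n θ).domRestrict Ψ, (hG.continuousOn.mono hSU).domRestrict⟩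
  have hBΨ : ∀ u ∈ sphCap n θ, B u = Ψ u := fun u hu => DFunLike.congr_fun hB ⟨u, hu⟩
  have hBsupp : IsCapSupp n θ B :=
    (isCapSupp_of_tauNonneg hU hcone hG hhom hτΨ hΨcap hs hc hΨpos).congr hBΨ
  have hBbal : ∀ a : V n, a (Fin.last n) = 0 →
      ∫ u, B u ^ (-(k : ℝ)) * ⟪u, a⟫ ∂capMeasure n θ = 0 := fun a ha => by
    refine integral_mul_inner_eq_zero hc (fun u hu => ?_) (fun i hi => ?_) ha
    · exact (B.continuous.continuousAt.rpow_const
        (Or.inl (by rw [hBΨ u hu]; exact (hΨpos u hu).ne'))).continuousWithinAt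
    · rw [← hint i hi, setIntegral_capCap]
      refine integral_congr_ae ((ae_mem_sphCap n θ).mono fun u hu => ?_)
      have h1 := (hφpos _ (hcap hu)).le
      have h2 : -(1 : ℝ) / k * -k = 1 := by field_simp
      simp only [hBΨ u hu, hΨval hu, sub_smul_Etop_apply hi]
      rw [← Real.rpow_mul h1, h2, Real.rpow_one]
  obtain ⟨z, hz0, hz1, m, M, hm, hz⟩ := exists_balanced_path hκ hs hc (isCapSupp_capSupp n θ)
    hBsupp (continuous_capSupp n θ) B.continuous (fun u hu => capSupp_pos hc hc1 hu)
    (fun u hu => by rw [hBΨ u hu]; exact hΨpos u hu)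
    (fun a ha => integral_capSupp_rpow_mul_inner a ha) hBbal
  have hf : ∀ t ∈ Icc (0 : ℝ) 1, ∀ u ∈ sphCap n θ,
      (1 - t) * (Real.sin θ ^ 2 - Real.cos θ * (u - Real.cos θ • Etop n) (Fin.last n)) +
        t * φ (u - Real.cos θ • Etop n) ^ (-(1 : ℝ) / k) - ⟪u - Real.cos θ • Etop n, z t⟫ =
      (1 - t) * capSupp n θ u + t * B u - ⟪u, z t⟫ := fun t ht u hu => by
    rw [← hΨval hu, ← hBΨ u hu, inner_sub_left, real_inner_smul_left,
      real_inner_comm (z t) (Etop n), inner_Etop, (hz t ht).1, capSupp_eq hu]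
    ring
  have hmem : ∀ t ∈ Icc (0 : ℝ) 1, ∀ ζ ∈ capCap n θ,
      (1 - t) * (Real.sin θ ^ 2 - Real.cos θ * ζ (Fin.last n)) +
        t * φ ζ ^ (-(1 : ℝ) / k) - ⟪ζ, z t⟫ ∈ Icc m M := fun t ht ζ hζ => by
    have hu := add_mem_sphCap hζ
    have h1 := hf t ht _ hu
    rw [add_sub_cancel_right] at h1
    rw [h1]
    exact (hz t ht).2.1 _ hu
  refine ⟨z, hz0, hz1, fun t ht => ⟨(hz t ht).1, fun ζ hζ => hm.trans_le (hmem t ht ζ hζ).1,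
    ?_, ?_, fun i hi => ?_⟩, max (m ^ (-(k : ℝ))) (max (M ^ (k : ℝ)) 1),
    (le_max_right _ _).trans (le_max_right _ _), fun t ht ζ hζ => ?_⟩
  · intro u hu v
    rw [homotopy_eq, hessQ_combo _ _ _ (contDiffAt_norm ℝ (ne_zero_of_mem_sphCap hu))
      (hG.contDiffAt (hU.mem_nhds (hSU hu)))]
    exact add_nonneg (mul_nonneg (sub_nonneg.2 ht.2) (hessQ_norm_nonneg hu.1 v))
      (mul_nonneg ht.1 (hτΨ u hu v))
  · intro u hu
    have huS : u ∈ sphCap n θ := ⟨hu.1, hu.2.ge⟩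
    rw [homotopy_eq, fderiv_combo _ _ _
      ((contDiffAt_norm ℝ (ne_zero_of_mem_sphCap huS) (n := 1)).differentiableAt one_ne_zero)
      ((hG.contDiffAt (hU.mem_nhds (hSU huS))).differentiableAt two_ne_zero),
      fderiv_norm_eq (ne_zero_of_mem_sphCap huS), hu.1]
    have h1 := inner_Etop n u
    have h2 := inner_Etop n (z t)
    rw [(hz t ht).1] at h2
    simp [hΨcap u hu, h1, h2, hu.2, Etop_last]
  · rw [setIntegral_capCap,
      ← (hz t ht).2.2 (EuclideanSpace.single i 1) (by simp [hi.symm])]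
    refine integral_congr_ae ((ae_mem_sphCap n θ).mono fun u hu => ?_)
    simp only [hf t ht u hu, sub_smul_Etop_apply hi]
    simp [EuclideanSpace.inner_single_right]
  · obtain ⟨h1, h2⟩ := hmem t ht ζ hζ
    set f := (1 - t) * (Real.sin θ ^ 2 - Real.cos θ * ζ (Fin.last n)) +
        t * φ ζ ^ (-(1 : ℝ) / k) - ⟪ζ, z t⟫
    have hf0 : 0 < f := hm.trans_le h1
    refine ⟨?_, (Real.rpow_le_rpow_of_nonpos hm h1 (neg_nonpos.2 hκ.le)).trans (le_max_left _ _)⟩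
    rw [Real.rpow_neg hf0.le, ← one_div]
    exact one_div_le_one_div_of_le (Real.rpow_pos_of_pos hf0 _)
      ((Real.rpow_le_rpow hf0.le h2 hκ.le).trans ((le_max_left _ _).trans (le_max_right _ _)))
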